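/- arXiv:1608.01488 — 2 statements merged into one kernel-verified Lean document; each statement's English description precedes it below -/
import Mathlib

section
/- Let G be any connected plane graph on n ≥ 5 vertices, and suppose a fire breaks out at a vertex r of G. Then there is a strategy using 2 + ⌊(deg(r) − 2)/2⌋ firefighters in the first round and 2 firefighters in each subsequent round that saves more than n/3 − 1 vertices of G. -/
/-- The set of vertices on fire after `t` fire-spread rounds, when the fire breaks out
at `v` and the firefighters protect the vertices of `P s` in round `s + 1` (protection
happens just before the `s`-th spread step and is permanent). -/
def burnedSet {V : Type*} (G : SimpleGraph V) (v : V) (P : ℕ → Set V) : ℕ → Set V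
  | 0 => {v}
  | t + 1 => burnedSet G v P t ∪
      {w | (∃ u ∈ burnedSet G v P t, G.Adj u w) ∧ ∀ s ≤ t, w ∉ P s}

/-- A strategy `P` is valid for the per-round budgets `b` if in each round it protects
at most `b t` vertices, none of which are already on fire. -/
def ValidStrategy {V : Type*} (G : SimpleGraph V) (b : ℕ → ℕ) (v : V) (P : ℕ → Set V) : Prop :=
  ∀ t, (P t).Finite ∧ (P t).ncard ≤ b t ∧ Disjoint (P t) (burnedSet G v P t)

/-- `sn G b v` is the maximum number of vertices that can be saved (i.e. that never
catch fire) when the fire breaks out at `v` and the firefighters may protect at most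
`b t` vertices in round `t + 1`. -/
noncomputable def sn {V : Type*} (G : SimpleGraph V) (b : ℕ → ℕ) (v : V) : ℕ :=
  sSup {m | ∃ P, ValidStrategy G b v P ∧
    m = Nat.card {w : V | ∀ t, w ∉ burnedSet G v P t}}

/-- The surviving rate of `G` with per-round budgets `b` : the expected fraction of
vertices that can be saved when the starting vertex is chosen uniformly at random. -/
noncomputable def survivingRate {V : Type*} [Fintype V] (G : SimpleGraph V) (b : ℕ → ℕ) : ℝ :=
  (∑ v : V, (sn G b v : ℝ)) / (Fintype.card V : ℝ) ^ 2

/-- A plane embedding of a simple graph: vertices are points of the plane and edges are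
simple arcs between their endpoints, such that arcs avoid all other vertices and two
arcs of distinct edges meet only in common endpoints. -/
structure PlaneEmbedding {V : Type*} (G : SimpleGraph V) where
  pos : V → ℝ × ℝ
  arc : V → V → ℝ → ℝ × ℝ
  pos_inj : Function.Injective pos
  arc_cont : ∀ ⦃u v⦄, G.Adj u v → Continuous (arc u v)
  arc_injOn : ∀ ⦃u v⦄, G.Adj u v → Set.InjOn (arc u v) (Set.Icc 0 1)
  arc_zero : ∀ ⦃u v⦄, G.Adj u v → arc u v 0 = pos u
  arc_one : ∀ ⦃u v⦄, G.Adj u v → arc u v 1 = pos v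
  arc_symm : ∀ ⦃u v⦄, G.Adj u v → ∀ t, arc v u t = arc u v (1 - t)
  arc_avoid : ∀ ⦃u v⦄, G.Adj u v → ∀ w : V, pos w ∉ arc u v '' Set.Ioo 0 1
  arc_meet : ∀ ⦃u v x y⦄, G.Adj u v → G.Adj x y → s(u, v) ≠ s(x, y) →
      arc u v '' Set.Icc 0 1 ∩ arc x y '' Set.Icc 0 1 ⊆
        ({pos u, pos v} : Set (ℝ × ℝ)) ∩ {pos x, pos y}

/-- A graph is planar if it admits a plane embedding. -/
def IsPlanar {V : Type*} (G : SimpleGraph V) : Prop :=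
  Nonempty (PlaneEmbedding G)

/-! ## Grid combinatorics -/

/-- Characteristic function of the open horizontal ray to the right of `g`. -/
def ffChi (g h : ℤ × ℤ) : ℤ := if h.2 = g.2 ∧ g.1 < h.1 then 1 else 0

/-- Signed crossing number of the edge `h h'` with the ray from `g`. -/
def ffKap (g h h' : ℤ × ℤ) : ℤ :=
  (if (h.2 = g.2 ∧ g.1 < h.1) ∧ h'.2 = g.2 + 1 then 1 else 0) -
  (if (h'.2 = g.2 ∧ g.1 < h'.1) ∧ h.2 = g.2 + 1 then 1 else 0)

/-- Positive edges of the triangulated grid. -/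
def ffPos (h h' : ℤ × ℤ) : Prop :=
  (h'.1 = h.1 + 1 ∧ h'.2 = h.2) ∨ (h'.1 = h.1 ∧ h'.2 = h.2 + 1) ∨
    (h'.1 = h.1 + 1 ∧ h'.2 = h.2 + 1)

/-- Positive edges of the square grid. -/
def ffPos4 (h h' : ℤ × ℤ) : Prop :=
  (h'.1 = h.1 + 1 ∧ h'.2 = h.2) ∨ (h'.1 = h.1 ∧ h'.2 = h.2 + 1)

/-- Adjacency in the square grid. -/
def ffAdj (h h' : ℤ × ℤ) : Prop := ffPos4 h h' ∨ ffPos4 h' h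

lemma ffKap_symm (g h h' : ℤ × ℤ) : ffKap g h' h = - ffKap g h h' := by
  unfold ffKap; ring

lemma ffKap_horiz {g g' h h' : ℤ × ℤ} (hp : ffPos h h') (e : g'.1 = g.1 + 1 ∧ g'.2 = g.2)
    (h2 : h ≠ g') (h4 : h' ≠ g') : ffKap g h h' = ffKap g' h h' := by
  obtain ⟨a, b⟩ := g; obtain ⟨a', b'⟩ := g'; obtain ⟨x, y⟩ := h; obtain ⟨x', y'⟩ := h'
  simp only [ffPos, ffKap, ne_eq, Prod.mk.injEq] at *
  split_ifs <;> omega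

lemma ffKap_vert {g g' h h' : ℤ × ℤ} (hp : ffPos h h') (e : g'.1 = g.1 ∧ g'.2 = g.2 + 1)
    (h1 : h ≠ g) (h2 : h ≠ g') (h3 : h' ≠ g) (h4 : h' ≠ g') :
    ffKap g h h' - ffKap g' h h' = ffChi g' h' - ffChi g' h := by
  obtain ⟨a, b⟩ := g; obtain ⟨a', b'⟩ := g'; obtain ⟨x, y⟩ := h; obtain ⟨x', y'⟩ := h'
  simp only [ffPos, ffKap, ffChi, ne_eq, Prod.mk.injEq] at *
  obtain ⟨rfl, rfl⟩ := e
  rcases hp with ⟨rfl, rfl⟩ | ⟨rfl, rfl⟩ | ⟨rfl, rfl⟩ <;> split_ifs <;> omega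

lemma ffKap_low (g : ℤ × ℤ) (i j : ℤ) (h1 : g ≠ (i, j)) (h2 : g ≠ (i+1, j))
    (h3 : g ≠ (i+1, j+1)) :
    ffKap g (i, j) (i+1, j) + ffKap g (i+1, j) (i+1, j+1) = ffKap g (i, j) (i+1, j+1) := by
  obtain ⟨a, b⟩ := g
  simp only [ffKap, ne_eq, Prod.mk.injEq] at *
  split_ifs <;> omega

lemma ffKap_high (g : ℤ × ℤ) (i j : ℤ) (h1 : g ≠ (i, j)) (h2 : g ≠ (i, j+1))
    (h3 : g ≠ (i+1, j+1)) :
    ffKap g (i, j) (i, j+1) + ffKap g (i, j+1) (i+1, j+1) = ffKap g (i, j) (i+1, j+1) := by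
  obtain ⟨a, b⟩ := g
  simp only [ffKap, ne_eq, Prod.mk.injEq] at *
  split_ifs <;> omega

/-- Connection inside `U`. -/
def ffConn (U : Set (ℤ × ℤ)) (a b : ℤ × ℤ) : Prop :=
  Relation.ReflTransGen (fun x y => ffAdj x y ∧ x ∈ U ∧ y ∈ U) a b

lemma ffConn.symm {U : Set (ℤ × ℤ)} {a b : ℤ × ℤ} (h : ffConn U a b) : ffConn U b a := by
  have : Std.Symm (fun x y => ffAdj x y ∧ x ∈ U ∧ y ∈ U) :=
    ⟨fun x y ⟨h1, h2, h3⟩ => ⟨h1.symm, h3, h2⟩⟩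
  exact Std.Symm.symm (r := Relation.ReflTransGen (fun x y => ffAdj x y ∧ x ∈ U ∧ y ∈ U)) _ _ h

lemma ffConn.mono {U U' : Set (ℤ × ℤ)} (hU : U ⊆ U') {a b : ℤ × ℤ} (h : ffConn U a b) :
    ffConn U' a b :=
  Relation.ReflTransGen.mono (fun _ _ h => ⟨h.1, hU h.2.1, hU h.2.2⟩) _ _ h

lemma ffConn.mem {U : Set (ℤ × ℤ)} {a b : ℤ × ℤ} (ha : a ∈ U) (h : ffConn U a b) : b ∈ U := by
  induction h with
  | refl => exact ha
  | tail _ h _ => exact h.2.2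

lemma ffConn_horiz {U : Set (ℤ × ℤ)} (j : ℤ) (i : ℤ) (k : ℕ)
    (h : ∀ l : ℤ, i ≤ l → l ≤ i + k → (l, j) ∈ U) : ffConn U (i, j) (i + k, j) := by
  induction k with
  | zero => simp only [Nat.cast_zero, add_zero]; exact Relation.ReflTransGen.refl
  | succ k ih =>
    refine Relation.ReflTransGen.tail (ih fun l h1 h2 => h l h1 (by push_cast; omega)) ?_
    refine ⟨Or.inl (Or.inl ⟨by push_cast; ring, rfl⟩), h _ (by omega) (by push_cast; omega),
      h _ (by omega) le_rfl⟩

lemma ffConn_vert {U : Set (ℤ × ℤ)} (i : ℤ) (j : ℤ) (k : ℕ)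
    (h : ∀ l : ℤ, j ≤ l → l ≤ j + k → (i, l) ∈ U) : ffConn U (i, j) (i, j + k) := by
  induction k with
  | zero => simp only [Nat.cast_zero, add_zero]; exact Relation.ReflTransGen.refl
  | succ k ih =>
    refine Relation.ReflTransGen.tail (ih fun l h1 h2 => h l h1 (by push_cast; omega)) ?_
    refine ⟨Or.inl (Or.inr ⟨rfl, by push_cast; ring⟩), h _ (by omega) (by push_cast; omega),
      h _ (by omega) le_rfl⟩

lemma ffConn_horiz' {U : Set (ℤ × ℤ)} (j : ℤ) (i i' : ℤ) (hi : i ≤ i')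
    (h : ∀ l : ℤ, i ≤ l → l ≤ i' → (l, j) ∈ U) : ffConn U (i, j) (i', j) := by
  obtain ⟨k, rfl⟩ := Int.le.dest hi
  exact ffConn_horiz j i k h

lemma ffConn_vert' {U : Set (ℤ × ℤ)} (i : ℤ) (j j' : ℤ) (hj : j ≤ j')
    (h : ∀ l : ℤ, j ≤ l → l ≤ j' → (i, l) ∈ U) : ffConn U (i, j) (i, j') := by
  obtain ⟨k, rfl⟩ := Int.le.dest hj
  exact ffConn_vert i j k h

lemma ffConn_univ (a b : ℤ × ℤ) : ffConn Set.univ a b := by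
  obtain ⟨x, y⟩ := a; obtain ⟨x', y'⟩ := b
  have h1 : ffConn Set.univ (x, y) (x', y) := by
    rcases le_total x x' with h | h
    · exact ffConn_horiz' y x x' h (by simp)
    · exact (ffConn_horiz' y x' x h (by simp)).symm
  have h2 : ffConn Set.univ (x', y) (x', y') := by
    rcases le_total y y' with h | h
    · exact ffConn_vert' x' y y' h (by simp)
    · exact (ffConn_vert' x' y' y h (by simp)).symm
  exact Relation.ReflTransGen.trans h1 h2

/-- The defining properties of the crossing number of a walk in `U` from `a` to `b`. -/
def ffInv (U : Set (ℤ × ℤ)) (a b : ℤ × ℤ) (θ : ℤ × ℤ → ℤ) : Prop :=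
  (∀ g g' : ℤ × ℤ, g ∉ U → g' ∉ U → g'.1 = g.1 + 1 ∧ g'.2 = g.2 → θ g = θ g') ∧
  (∀ g g' : ℤ × ℤ, g ∉ U → g' ∉ U → g'.1 = g.1 ∧ g'.2 = g.2 + 1 →
    θ g - θ g' = ffChi g' b - ffChi g' a)

lemma ffInv_exists {U : Set (ℤ × ℤ)} {a b : ℤ × ℤ} (h : ffConn U a b) :
    ∃ θ, ffInv U a b θ := by
  induction h with
  | refl => exact ⟨fun _ => 0, by simp, by simp⟩
  | @tail c d _ h ih =>
    obtain ⟨θ, h1, h2⟩ := ih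
    obtain ⟨hadj, hc, hd⟩ := h
    have ne : ∀ {g x : ℤ × ℤ}, g ∉ U → x ∈ U → x ≠ g := by
      rintro g x hg hx rfl; exact hg hx
    refine ⟨fun g => θ g + ffKap g c d, ?_, ?_⟩
    · intro g g' hg hg' e
      beta_reduce
      rw [h1 g g' hg hg' e]
      rcases hadj with p | p
      · have p' : ffPos c d := by unfold ffPos; unfold ffPos4 at p; tauto
        rw [ffKap_horiz p' e (ne hg' hc) (ne hg' hd)]
      · have p' : ffPos d c := by unfold ffPos; unfold ffPos4 at p; tauto
        rw [ffKap_symm g d c, ffKap_symm g' d c, ffKap_horiz p' e (ne hg' hd) (ne hg' hc)]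
    · intro g g' hg hg' e
      have := h2 g g' hg hg' e
      rcases hadj with p | p
      · have p' : ffPos c d := by unfold ffPos; unfold ffPos4 at p; tauto
        have := ffKap_vert p' e (ne hg hc) (ne hg' hc) (ne hg hd) (ne hg' hd)
        simp only; linarith
      · have p' : ffPos d c := by unfold ffPos; unfold ffPos4 at p; tauto
        have := ffKap_vert p' e (ne hg hd) (ne hg' hd) (ne hg hc) (ne hg' hc)
        beta_reduce; rw [ffKap_symm g d c, ffKap_symm g' d c]; linarith

/-- Winding numbers are locally constant off the curve. -/
lemma ffWind_step {U U' : Set (ℤ × ℤ)} {a h h' : ℤ × ℤ} {θ θ' : ℤ × ℤ → ℤ}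
    (H : ffInv U a h θ) (H' : ffInv U' a h' θ') (hh : h ∈ U) (hh' : h' ∈ U')
    (hp : ffPos h h') {g g' : ℤ × ℤ} (hg : g ∉ U) (hg' : g' ∉ U) (kg : g ∉ U') (kg' : g' ∉ U')
    (p : ffAdj g g') :
    θ g + ffKap g h h' - θ' g = θ g' + ffKap g' h h' - θ' g' := by
  have ne : ∀ {W : Set (ℤ × ℤ)} {g x : ℤ × ℤ}, g ∉ W → x ∈ W → x ≠ g := by
    rintro W g x hg hx rfl; exact hg hx
  have key : ∀ g g' : ℤ × ℤ, g ∉ U → g' ∉ U → g ∉ U' → g' ∉ U' → ffPos4 g g' →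
      θ g + ffKap g h h' - θ' g = θ g' + ffKap g' h h' - θ' g' := by
    intro g g' hg hg' kg kg' p
    rcases p with e | e
    · rw [H.1 g g' hg hg' e, H'.1 g g' kg kg' e, ffKap_horiz hp e (ne hg' hh) (ne kg' hh')]
    · have h1 := H.2 g g' hg hg' e
      have h2 := H'.2 g g' kg kg' e
      have h3 := ffKap_vert hp e (ne hg hh) (ne hg' hh) (ne kg hh') (ne kg' hh')
      linarith
  rcases p with p | p
  · exact key g g' hg hg' kg kg' p
  · exact (key g' g hg' hg kg' kg p).symm

lemma ffWind_conn {U U' N : Set (ℤ × ℤ)} {a h h' : ℤ × ℤ} {θ θ' : ℤ × ℤ → ℤ}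
    (H : ffInv U a h θ) (H' : ffInv U' a h' θ') (hh : h ∈ U) (hh' : h' ∈ U')
    (hp : ffPos h h') (hN : Disjoint N U) (hN' : Disjoint N U') {g g' : ℤ × ℤ}
    (c : ffConn N g g') :
    θ g + ffKap g h h' - θ' g = θ g' + ffKap g' h h' - θ' g' := by
  induction c with
  | refl => rfl
  | @tail x y _ hs ih =>
    rw [ih]
    exact ffWind_step H H' hh hh' hp (Set.disjoint_left.1 hN hs.2.1)
      (Set.disjoint_left.1 hN hs.2.2) (Set.disjoint_left.1 hN' hs.2.1)
      (Set.disjoint_left.1 hN' hs.2.2) hs.1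

lemma ff_stokes (a b : ℤ → ℤ → ℤ) (h : ∀ i j, a i j + b (i+1) j = b i j + a i (j+1))
    (N M : ℕ) (x y : ℤ) :
    ∑ i ∈ Finset.range N, a (x+i) y + ∑ j ∈ Finset.range M, b (x+N) (y+j) =
      ∑ j ∈ Finset.range M, b x (y+j) + ∑ i ∈ Finset.range N, a (x+i) (y+M) := by
  have row : ∀ (N : ℕ) (y : ℤ), ∑ i ∈ Finset.range N, a (x+i) y + b (x+N) y =
      b x y + ∑ i ∈ Finset.range N, a (x+i) (y+1) := by
    intro N y
    induction N with
    | zero => simp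
    | succ N ih =>
      rw [Finset.sum_range_succ, Finset.sum_range_succ]
      have := h (x+N) y
      push_cast
      rw [← add_assoc x]
      linarith
  induction M with
  | zero => simp
  | succ M ih =>
    rw [Finset.sum_range_succ, Finset.sum_range_succ]
    have := row N (y+M)
    push_cast
    rw [← add_assoc y]
    linarith

/-- The final contradiction: there is no cocycle with the given boundary behaviour. -/
lemma ff_no_cocycle (s : ℤ × ℤ → ℤ × ℤ → ℤ) (g : ℤ × ℤ) (τ : ℤ × ℤ → ℤ) (N : ℕ)
    (hlow : ∀ i j : ℤ, s (i, j) (i+1, j) + s (i+1, j) (i+1, j+1) = s (i, j) (i+1, j+1))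
    (hhigh : ∀ i j : ℤ, s (i, j) (i, j+1) + s (i, j+1) (i+1, j+1) = s (i, j) (i+1, j+1))
    (hg1 : -N < g.1 ∧ g.1 < N) (hg2 : -N < g.2 ∧ g.2 < N)
    (hb : ∀ h h' : ℤ × ℤ, ffPos h h' → (|h.1| = N ∨ |h.2| = N) → (|h'.1| = N ∨ |h'.2| = N) →
      |h.1| ≤ N → |h.2| ≤ N → |h'.1| ≤ N → |h'.2| ≤ N →
      s h h' = τ h + ffKap g h h' - τ h') : False := by
  have st := ff_stokes (fun i j => s (i, j) (i+1, j)) (fun i j => s (i, j) (i, j+1))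
    (fun i j => by have := hlow i j; have := hhigh i j; linarith) (2*N) (2*N) (-N) (-N)
  have Nn : |(N : ℤ)| = N := abs_of_nonneg (by positivity)
  have e : (-(N:ℤ) + (2 * N : ℕ)) = N := by push_cast; ring
  simp only [e] at st
  have bd : ∀ i ∈ Finset.range (2*N), |-(N:ℤ) + i| ≤ N ∧ |-(N:ℤ) + i + 1| ≤ N := by
    intro i hi
    rw [Finset.mem_range] at hi
    constructor <;> rw [abs_le] <;> constructor <;> omega
  have hor : ∀ y : ℤ, |y| = N → ∑ i ∈ Finset.range (2*N), s (-(N:ℤ) + i, y) (-(N:ℤ) + i + 1, y) =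
      τ (-N, y) - τ (N, y) := by
    intro y hy
    have : ∀ i ∈ Finset.range (2*N), s (-(N:ℤ) + i, y) (-(N:ℤ) + i + 1, y) =
        τ (-(N:ℤ) + i, y) - τ (-(N:ℤ) + (i + 1 : ℕ), y) := by
      intro i hi
      obtain ⟨b1, b2⟩ := bd i hi
      rw [hb (-(N:ℤ) + i, y) (-(N:ℤ) + i + 1, y) (Or.inl ⟨rfl, rfl⟩) (Or.inr hy) (Or.inr hy) b1 hy.le b2 hy.le]
      have : ffKap g (-(N:ℤ) + i, y) (-(N:ℤ) + i + 1, y) = 0 := by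
        simp only [ffKap]; split_ifs <;> omega
      rw [this]; push_cast; rw [add_zero, add_assoc]
    rw [Finset.sum_congr rfl this, Finset.sum_range_sub' (fun i : ℕ => τ (-(N:ℤ) + i, y)), e]
    simp
  have ver : ∀ x : ℤ, |x| = N → ∑ i ∈ Finset.range (2*N), s (x, -(N:ℤ) + i) (x, -(N:ℤ) + i + 1) =
      τ (x, -N) - τ (x, N) +
      ∑ i ∈ Finset.range (2*N), ffKap g (x, -(N:ℤ) + i) (x, -(N:ℤ) + i + 1) := by
    intro y hy
    have : ∀ i ∈ Finset.range (2*N), s (y, -(N:ℤ) + i) (y, -(N:ℤ) + i + 1) =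
        (τ (y, -(N:ℤ) + i) - τ (y, -(N:ℤ) + (i + 1 : ℕ))) +
          ffKap g (y, -(N:ℤ) + i) (y, -(N:ℤ) + i + 1) := by
      intro i hi
      obtain ⟨b1, b2⟩ := bd i hi
      rw [hb (y, -(N:ℤ) + i) (y, -(N:ℤ) + i + 1) (Or.inr (Or.inl ⟨rfl, rfl⟩)) (Or.inl hy) (Or.inl hy) hy.le b1 hy.le b2]
      push_cast; rw [← add_assoc]; ring
    rw [Finset.sum_congr rfl this, Finset.sum_add_distrib,
      Finset.sum_range_sub' (fun i : ℕ => τ (y, -(N:ℤ) + i)), e]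
    simp
  rw [hor N Nn, hor (-N) (by rw [abs_neg, Nn]), ver N Nn, ver (-N) (by rw [abs_neg, Nn])] at st
  have k1 : ∑ i ∈ Finset.range (2*N), ffKap g (-(N:ℤ), -(N:ℤ) + i) (-(N:ℤ), -(N:ℤ) + i + 1) = 0 := by
    apply Finset.sum_eq_zero
    intro i _
    simp only [ffKap]; split_ifs <;> omega
  have k2 : ∑ i ∈ Finset.range (2*N), ffKap g ((N:ℤ), -(N:ℤ) + i) ((N:ℤ), -(N:ℤ) + i + 1) = 1 := by
    rw [Finset.sum_eq_single (g.2 + N).toNat]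
    · simp only [ffKap]; split_ifs <;> omega
    · intro i _ hi
      simp only [ffKap]; split_ifs <;> omega
    · intro hi
      rw [Finset.mem_range] at hi
      omega
  rw [k1, k2] at st
  linarith

/-! ## The separator lemma, from a grid model of the graph -/

/-- Component of `v` in `G - S`. -/
def ffComp {V : Type} (G : SimpleGraph V) (S : Set V) (v : V) : Set V :=
  {w | Relation.ReflTransGen (fun a b => G.Adj a b ∧ a ∉ S ∧ b ∉ S) v w}

lemma ffComp_not_mem {V : Type} {G : SimpleGraph V} {S : Set V} {v w : V} (hv : v ∉ S)
    (h : w ∈ ffComp G S v) : w ∉ S := by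
  induction h with
  | refl => exact hv
  | tail _ h _ => exact h.2.2

lemma ff_triple {V : Type} [Fintype V] (r : V) (A B C : Set V) (hA : r ∉ A) (hB : r ∉ B)
    (hC : r ∉ C) (cA : 2 * Fintype.card V ≤ 3 * A.ncard) (cB : 2 * Fintype.card V ≤ 3 * B.ncard)
    (cC : 2 * Fintype.card V ≤ 3 * C.ncard) : ∃ v, v ∈ A ∧ v ∈ B ∧ v ∈ C := by
  classical
  by_contra hno
  push Not at hno
  have h1 := Set.ncard_union_add_ncard_inter A B
  have h2 : Disjoint (A ∩ B) C := by
    rw [Set.disjoint_left]; rintro v ⟨ha, hb⟩ hc; exact hno v ha hb hc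
  have h3 := Set.ncard_union_eq h2
  have h4 : ∀ s : Set V, r ∉ s → s.ncard + 1 ≤ Fintype.card V := by
    intro s hs
    rw [← Set.ncard_insert_of_notMem hs, ← Nat.card_eq_fintype_card]
    exact Set.ncard_le_card _
  have h5 := h4 (A ∪ B) (by simp [hA, hB])
  have h6 := h4 (A ∩ B ∪ C) (by simp [hA, hC])
  omega

lemma ff_separator {V : Type} [Fintype V] (G : SimpleGraph V) (r : V) (P : V → Set V)
    (NK : V → Set (ℤ × ℤ)) (rep : V → ℤ × ℤ) (N : ℕ)
    (hrP : ∀ x, r ∈ P x)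
    (hrep : ∀ v, rep v ∈ NK v)
    (hconn : ∀ x, ∀ h ∈ NK x, ffConn (⋃ y ∈ P x, NK y) (rep r) h)
    (hrepd : ∀ v y, y ≠ v → rep v ∉ NK y)
    (hadj : ∀ v w, G.Adj v w → ∃ M, M ⊆ NK v ∪ NK w ∧
      (∀ y, y ≠ v → y ≠ w → Disjoint M (NK y)) ∧ ffConn M (rep v) (rep w))
    (hbd : ∀ x, ∀ h ∈ NK x, |h.1| < (N : ℤ) ∧ |h.2| < (N : ℤ)) :
    ∃ x x', ∀ v, v ∉ P x ∪ P x' →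
      3 * (ffComp G (P x ∪ P x') v).ncard < 2 * Fintype.card V := by
  classical
  by_contra hcon
  push Not at hcon
  choose bv hbv hbig using hcon
  set D : Set (ℤ × ℤ) := ⋃ x, NK x with hD
  set U : V → Set (ℤ × ℤ) := fun x => Dᶜ ∪ ⋃ y ∈ P x, NK y with hU
  have hrU : ∀ x, rep r ∈ U x := fun x =>
    Or.inr (Set.mem_biUnion (hrP x) (hrep r))
  have hDU : ∀ x h, h ∉ D → h ∈ U x := fun x h hh => Or.inl hh
  have good : ∀ h, ∃ x, ffConn (U x) (rep r) h := by
    intro h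
    have := ffConn_univ (rep r) h
    induction this with
    | refl => exact ⟨r, Relation.ReflTransGen.refl⟩
    | @tail c d _ hs ih =>
      by_cases hd : d ∈ D
      · obtain ⟨x, hx⟩ := Set.mem_iUnion.1 hd
        exact ⟨x, (hconn x d hx).mono Set.subset_union_right⟩
      · obtain ⟨x, hx⟩ := ih
        exact ⟨x, hx.tail ⟨hs.1, hx.mem (hrU x), hDU x d hd⟩⟩
  obtain ⟨x0, hx0⟩ := good (N, N)
  have hbD : ∀ h : ℤ × ℤ, |h.1| = N ∨ |h.2| = N → h ∈ Dᶜ := by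
    intro h hh hd
    obtain ⟨x, hx⟩ := Set.mem_iUnion.1 hd
    have := hbd x h hx
    omega
  have Nn : |(N : ℤ)| = N := abs_of_nonneg (by positivity)
  have Nn' : |-(N : ℤ)| = N := by rw [abs_neg, Nn]
  have hbc : ∀ h : ℤ × ℤ, |h.1| = N ∨ |h.2| = N → |h.1| ≤ N → |h.2| ≤ N →
      ffConn Dᶜ (N, N) h := by
    rintro ⟨i, j⟩ hh h1 h2
    simp only at hh h1 h2
    rw [abs_le] at h1 h2
    have hN : (0:ℤ) ≤ N := by positivity
    have top : ∀ i : ℤ, i ≤ N → ffConn Dᶜ (N, N) (i, N) := fun i hi =>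
      (ffConn_horiz' N i N hi (fun l _ _ => hbD _ (Or.inr Nn))).symm
    have right : ∀ j : ℤ, j ≤ N → ffConn Dᶜ (N, N) (N, j) := fun i hi =>
      (ffConn_vert' N i N hi (fun l _ _ => hbD _ (Or.inl Nn))).symm
    rcases hh with h | h
    · rcases (abs_eq hN).1 h with rfl | rfl
      · exact right j h2.2
      · exact Relation.ReflTransGen.trans (top (-N) (by omega))
          (ffConn_vert' (-N) j N h2.2 (fun l _ _ => hbD _ (Or.inl Nn'))).symm
    · rcases (abs_eq hN).1 h with rfl | rfl
      · exact top i h1.2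
      · exact Relation.ReflTransGen.trans (right (-N) (by omega))
          (ffConn_horiz' (-N) i N h1.2 (fun l _ _ => hbD _ (Or.inr Nn'))).symm
  have good' : ∀ h, ∃ x, ffConn (U x) (rep r) h ∧ (ffConn (U x0) (rep r) h → x = x0) := by
    intro h
    by_cases hh : ffConn (U x0) (rep r) h
    · exact ⟨x0, hh, fun _ => rfl⟩
    · obtain ⟨x, hx⟩ := good h
      exact ⟨x, hx, fun h' => absurd h' hh⟩
  choose lab hlab hlab0 using good'
  have hmem : ∀ h, h ∈ U (lab h) := fun h => (hlab h).mem (hrU _)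
  have hθ : ∀ h, ∃ θ, ffInv (U (lab h)) (rep r) h θ := fun h => ffInv_exists (hlab h)
  choose θ hθ using hθ
  have hlabB : ∀ h : ℤ × ℤ, |h.1| = N ∨ |h.2| = N → |h.1| ≤ N → |h.2| ≤ N → lab h = x0 := by
    intro h h1 h2 h3
    exact hlab0 h (Relation.ReflTransGen.trans hx0
      ((hbc h h1 h2 h3).mono Set.subset_union_left))
  have repU : ∀ v x, v ∉ P x → rep v ∉ U x := by
    rintro v x hv (h | h)
    · exact h (Set.mem_iUnion.2 ⟨v, hrep v⟩)
    · simp only [Set.mem_iUnion] at h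
      obtain ⟨y, hy, h⟩ := h
      exact hrepd v y (fun e => hv (e ▸ hy)) h
  have wind : ∀ h h', ffPos h h' → ∀ v,
      v ∈ ffComp G (P (lab h) ∪ P (lab h')) (bv (lab h) (lab h')) →
      θ h (rep v) + ffKap (rep v) h h' - θ h' (rep v) =
      θ h (rep (bv (lab h) (lab h'))) + ffKap (rep (bv (lab h) (lab h'))) h h' -
        θ h' (rep (bv (lab h) (lab h'))) := by
    intro h h' hp v hv
    induction hv with
    | refl => rfl
    | @tail c d _ hs ih =>
      rw [← ih]
      obtain ⟨ha, hc, hd⟩ := hs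
      obtain ⟨M, hM1, hM2, hM3⟩ := hadj c d ha
      have hdis : ∀ x, c ∉ P x → d ∉ P x → Disjoint M (U x) := by
        intro x hc hd
        rw [Set.disjoint_left]
        rintro g hg (h | h)
        · rcases hM1 hg with h' | h'
          · exact h (Set.mem_iUnion.2 ⟨c, h'⟩)
          · exact h (Set.mem_iUnion.2 ⟨d, h'⟩)
        · simp only [Set.mem_iUnion] at h
          obtain ⟨y, hy, h⟩ := h
          exact Set.disjoint_left.1 (hM2 y (fun e => hc (e ▸ hy)) (fun e => hd (e ▸ hy))) hg h
      simp only [Set.mem_union, not_or] at hc hd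
      exact (ffWind_conn (hθ h) (hθ h') (hmem h) (hmem h') hp (hdis _ hc.1 hd.1)
        (hdis _ hc.2 hd.2) hM3).symm
  set s : ℤ × ℤ → ℤ × ℤ → ℤ := fun h h' =>
    θ h (rep (bv (lab h) (lab h'))) + ffKap (rep (bv (lab h) (lab h'))) h h' -
        θ h' (rep (bv (lab h) (lab h'))) with hs
  have hnr : ∀ x x', r ∉ ffComp G (P x ∪ P x') (bv x x') := fun x x' h =>
    ffComp_not_mem (hbv x x') h (Or.inl (hrP x))
  have trip : ∀ h1 h2 h3, ∃ v,
      v ∈ ffComp G (P (lab h1) ∪ P (lab h2)) (bv (lab h1) (lab h2)) ∧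
      v ∈ ffComp G (P (lab h2) ∪ P (lab h3)) (bv (lab h2) (lab h3)) ∧
      v ∈ ffComp G (P (lab h1) ∪ P (lab h3)) (bv (lab h1) (lab h3)) := fun h1 h2 h3 =>
    ff_triple r _ _ _ (hnr _ _) (hnr _ _) (hnr _ _) (hbig _ _) (hbig _ _) (hbig _ _)
  have repne : ∀ h v, v ∉ P (lab h) → rep v ≠ h := by
    intro h v hv e
    exact repU v _ hv (e ▸ hmem h)
  have tri : ∀ h1 h2 h3, ffPos h1 h2 → ffPos h2 h3 → ffPos h1 h3 →
      (∀ g, g ≠ h1 → g ≠ h2 → g ≠ h3 → ffKap g h1 h2 + ffKap g h2 h3 = ffKap g h1 h3) →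
      s h1 h2 + s h2 h3 = s h1 h3 := by
    intro h1 h2 h3 p12 p23 p13 hk
    obtain ⟨v, v1, v2, v3⟩ := trip h1 h2 h3
    have n1 := ffComp_not_mem (hbv _ _) v1
    have n2 := ffComp_not_mem (hbv _ _) v2
    simp only [Set.mem_union, not_or] at n1 n2
    have := hk (rep v) (repne _ _ n1.1) (repne _ _ n1.2) (repne _ _ n2.2)
    have w1 := wind _ _ p12 v v1
    have w2 := wind _ _ p23 v v2
    have w3 := wind _ _ p13 v v3
    simp only [hs]
    rw [← w1, ← w2, ← w3]
    linarith
  have hg := hbd _ _ (hrep (bv x0 x0))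
  simp only [abs_lt] at hg
  refine ff_no_cocycle s (rep (bv x0 x0)) (fun h => θ h (rep (bv x0 x0))) N ?_ ?_ hg.1 hg.2 ?_
  · intro i j
    exact tri _ _ _ (Or.inl ⟨rfl, rfl⟩) (Or.inr (Or.inl ⟨rfl, rfl⟩)) (Or.inr (Or.inr ⟨rfl, rfl⟩))
      (fun g => ffKap_low g i j)
  · intro i j
    exact tri _ _ _ (Or.inr (Or.inl ⟨rfl, rfl⟩)) (Or.inl ⟨rfl, rfl⟩) (Or.inr (Or.inr ⟨rfl, rfl⟩))
      (fun g => ffKap_high g i j)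
  · intro h h' _ a1 a2 b1 b2 b3 b4
    simp only [hs]
    rw [hlabB h a1 b1 b2, hlabB h' a2 b3 b4]

/-! ## Discretising plane sets -/

/-- Grid point of mesh `ε`. -/
noncomputable def ffPt (ε : ℝ) (h : ℤ × ℤ) : ℝ × ℝ := (ε * h.1, ε * h.2)

/-- Grid vertices close to `K`. -/
def ffN (ε : ℝ) (K : Set (ℝ × ℝ)) : Set (ℤ × ℤ) := {h | ∃ k ∈ K, dist (ffPt ε h) k < ε}

lemma ff_dist_iff (ε : ℝ) (h : ℤ × ℤ) (k : ℝ × ℝ) :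
    dist (ffPt ε h) k < ε ↔ |ε * h.1 - k.1| < ε ∧ |ε * h.2 - k.2| < ε := by
  rw [Prod.dist_eq, max_lt_iff, Real.dist_eq, Real.dist_eq]; rfl

lemma ffN_near {ε : ℝ} (hε : 0 < ε) (k : ℝ × ℝ) : ∃ h, dist (ffPt ε h) k < ε := by
  have key : ∀ x : ℝ, |ε * (⌊x / ε⌋ : ℤ) - x| < ε := by
    intro x
    have h1 := Int.floor_le (x / ε)
    have h2 := Int.lt_floor_add_one (x / ε)
    rw [le_div_iff₀ hε] at h1
    rw [div_lt_iff₀ hε] at h2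
    rw [abs_lt]; constructor <;> nlinarith
  exact ⟨(⌊k.1 / ε⌋, ⌊k.2 / ε⌋), (ff_dist_iff _ _ _).2 ⟨key _, key _⟩⟩

lemma ffN_mono {ε : ℝ} {K K' : Set (ℝ × ℝ)} (h : K ⊆ K') : ffN ε K ⊆ ffN ε K' :=
  fun _ ⟨k, hk, hd⟩ => ⟨k, h hk, hd⟩

lemma ff_int_close {ε x : ℝ} (hε : 0 < ε) {i i' : ℤ} (h : |ε * i - x| < ε)
    (h' : |ε * i' - x| < ε) : i' = i ∨ i' = i + 1 ∨ i = i' + 1 := by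
  rw [abs_lt] at h h'
  have h1 : ε * ((i : ℝ) - i') < ε * 2 := by linarith
  have h2 : ε * ((i' : ℝ) - i) < ε * 2 := by linarith
  have h1 := lt_of_mul_lt_mul_left h1 hε.le
  have h2 := lt_of_mul_lt_mul_left h2 hε.le
  have h1 : i - i' < 2 := by exact_mod_cast h1
  have h2 : i' - i < 2 := by exact_mod_cast h2
  omega

lemma ffN_local {ε : ℝ} (hε : 0 < ε) {K : Set (ℝ × ℝ)} {k : ℝ × ℝ} (hk : k ∈ K)
    {h h' : ℤ × ℤ} (hd : dist (ffPt ε h) k < ε) (hd' : dist (ffPt ε h') k < ε) :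
    ffConn (ffN ε K) h h' := by
  obtain ⟨i, j⟩ := h
  obtain ⟨i', j'⟩ := h'
  have m1 : (i, j) ∈ ffN ε K := ⟨k, hk, hd⟩
  have m2 : (i', j') ∈ ffN ε K := ⟨k, hk, hd'⟩
  rw [ff_dist_iff] at hd hd'
  have m3 : (i, j') ∈ ffN ε K := ⟨k, hk, (ff_dist_iff _ _ _).2 ⟨hd.1, hd'.2⟩⟩
  have c1 : ffConn (ffN ε K) (i, j) (i, j') := by
    rcases ff_int_close hε hd.2 hd'.2 with e | e | e
    · simp only at e; subst e; exact Relation.ReflTransGen.refl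
    · exact Relation.ReflTransGen.single ⟨Or.inl (Or.inr ⟨rfl, e⟩), m1, m3⟩
    · exact Relation.ReflTransGen.single ⟨Or.inr (Or.inr ⟨rfl, e⟩), m1, m3⟩
  have c2 : ffConn (ffN ε K) (i, j') (i', j') := by
    rcases ff_int_close hε hd.1 hd'.1 with e | e | e
    · simp only at e; subst e; exact Relation.ReflTransGen.refl
    · exact Relation.ReflTransGen.single ⟨Or.inl (Or.inl ⟨e, rfl⟩), m3, m2⟩
    · exact Relation.ReflTransGen.single ⟨Or.inr (Or.inl ⟨e, rfl⟩), m3, m2⟩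
  exact Relation.ReflTransGen.trans c1 c2

lemma ffN_conn {ε : ℝ} (hε : 0 < ε) {K : Set (ℝ × ℝ)} (hK : IsPreconnected K)
    {h h' : ℤ × ℤ} (hh : h ∈ ffN ε K) (hh' : h' ∈ ffN ε K) : ffConn (ffN ε K) h h' := by
  by_contra hno
  obtain ⟨k, hk, hd⟩ := hh
  obtain ⟨k', hk', hd'⟩ := hh'
  have op : ∀ A : Set (ℤ × ℤ), IsOpen {k : ℝ × ℝ | ∃ g ∈ A, dist (ffPt ε g) k < ε} := by
    intro A
    have : {k : ℝ × ℝ | ∃ g ∈ A, dist (ffPt ε g) k < ε} =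
        ⋃ g ∈ A, Metric.ball (ffPt ε g) ε := by
      ext k; simp [dist_comm]
    rw [this]
    exact isOpen_biUnion fun _ _ => Metric.isOpen_ball
  obtain ⟨m, hm, ⟨g, hg, hgd⟩, ⟨g', hg', hgd'⟩⟩ := hK _ _
    (op {g | ffConn (ffN ε K) h g}) (op {g | ¬ ffConn (ffN ε K) h g})
    (by
      intro m _
      obtain ⟨g, hg⟩ := ffN_near hε m
      by_cases hc : ffConn (ffN ε K) h g
      · exact Or.inl ⟨g, hc, hg⟩
      · exact Or.inr ⟨g, hc, hg⟩)
    ⟨k, hk, h, Relation.ReflTransGen.refl, hd⟩ ⟨k', hk', h', hno, hd'⟩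
  exact hg' (Relation.ReflTransGen.trans hg (ffN_local hε hm hgd hgd'))

lemma ffN_disjoint {K K' : Set (ℝ × ℝ)} (hK : IsCompact K) (hK' : IsCompact K')
    (hd : Disjoint K K') : ∃ δ > 0, ∀ ε, ε ≤ δ → Disjoint (ffN ε K) (ffN ε K') := by
  obtain ⟨δ, hδ, h⟩ := hd.exists_thickenings hK hK'.isClosed
  refine ⟨δ, hδ, fun ε hε => ?_⟩
  rw [Set.disjoint_left]
  rintro g ⟨k, hk, h1⟩ ⟨k', hk', h2⟩
  exact Set.disjoint_left.1 h (Metric.mem_thickening_iff.2 ⟨k, hk, h1.trans_le hε⟩)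
    (Metric.mem_thickening_iff.2 ⟨k', hk', h2.trans_le hε⟩)

lemma ffN_bdd {ε : ℝ} (hε : 0 < ε) {K : Set (ℝ × ℝ)} (hK : IsCompact K) :
    ∃ N : ℕ, ∀ h ∈ ffN ε K, |h.1| < (N : ℤ) ∧ |h.2| < (N : ℤ) := by
  obtain ⟨M, hM⟩ := hK.isBounded.exists_norm_le
  obtain ⟨N, hN⟩ := exists_nat_gt ((M + ε) / ε)
  rw [div_lt_iff₀ hε] at hN
  refine ⟨N, ?_⟩
  rintro h ⟨k, hk, hd⟩
  have hk := hM k hk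
  rw [Prod.norm_def, max_le_iff, Real.norm_eq_abs, Real.norm_eq_abs] at hk
  rw [ff_dist_iff] at hd
  have key : ∀ (i : ℤ) (x : ℝ), |ε * i - x| < ε → |x| ≤ M → |i| < (N : ℤ) := by
    intro i x h1 h2
    have h3 : |ε * i| < N * ε := by
      have := abs_add_le (ε * i - x) x
      rw [sub_add_cancel] at this
      linarith
    rw [abs_mul, abs_of_pos hε, mul_comm] at h3
    have := lt_of_mul_lt_mul_right h3 hε.le
    exact_mod_cast this
  exact ⟨key _ _ hd.1 hk.1, key _ _ hd.2 hk.2⟩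

/-- Star of half-edges at a vertex. -/
def ffStar {V : Type} {G : SimpleGraph V} (E : PlaneEmbedding G) (x : V) : Set (ℝ × ℝ) :=
  {E.pos x} ∪ ⋃ y, ⋃ (_ : G.Adj x y), E.arc x y '' Set.Icc 0 (1/2)

section star
variable {V : Type} {G : SimpleGraph V} (E : PlaneEmbedding G)

lemma ffStar_compact [Finite V] (x : V) : IsCompact (ffStar E x) := by
  refine isCompact_singleton.union (isCompact_iUnion fun y => isCompact_iUnion fun h => ?_)
  exact isCompact_Icc.image (E.arc_cont h)

lemma ffStar_preconn (x : V) : IsPreconnected (ffStar E x) := by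
  apply isPreconnected_of_forall (E.pos x)
  rintro p (hp | hp)
  · refine ⟨{E.pos x}, ?_, rfl, hp, isPreconnected_singleton⟩
    exact Set.subset_union_left
  · simp only [Set.mem_iUnion] at hp
    obtain ⟨y, hy, hp⟩ := hp
    refine ⟨E.arc x y '' Set.Icc 0 (1/2), ?_, ⟨0, by norm_num, E.arc_zero hy⟩, hp,
      isPreconnected_Icc.image _ (E.arc_cont hy).continuousOn⟩
    refine Set.Subset.trans ?_ Set.subset_union_right
    exact Set.subset_iUnion_of_subset y (Set.subset_iUnion_of_subset hy le_rfl)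

lemma ffStar_arc {x y : V} (h : G.Adj x y) {t : ℝ} (h0 : 0 ≤ t) (h1 : t ≤ 1/2) :
    E.arc x y t ∈ ffStar E x := by
  refine Or.inr ?_
  simp only [Set.mem_iUnion]
  exact ⟨y, h, t, ⟨h0, h1⟩, rfl⟩

lemma ffArc_sub {x y : V} (h : G.Adj x y) :
    E.arc x y '' Set.Icc 0 1 ⊆ ffStar E x ∪ ffStar E y := by
  rintro _ ⟨t, ⟨h0, h1⟩, rfl⟩
  rcases le_total t (1/2) with ht | ht
  · exact Or.inl (ffStar_arc E h h0 ht)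
  · right
    rw [E.arc_symm h.symm]
    exact ffStar_arc E h.symm (by linarith) (by linarith)

lemma ffStar_pos {v y : V} (h : y ≠ v) : E.pos v ∉ ffStar E y := by
  rintro (hp | hp)
  · exact h (E.pos_inj hp).symm
  · simp only [Set.mem_iUnion] at hp
    obtain ⟨z, hz, t, ⟨h0, h1⟩, ht⟩ := hp
    rcases h0.eq_or_lt with rfl | h0
    · rw [E.arc_zero hz] at ht
      exact h (E.pos_inj ht)
    · exact E.arc_avoid hz v ⟨t, ⟨h0, by linarith⟩, ht⟩

lemma ffStar_disj_arc {v w y : V} (h : G.Adj v w) (hv : y ≠ v) (hw : y ≠ w) :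
    Disjoint (E.arc v w '' Set.Icc 0 1) (ffStar E y) := by
  rw [Set.disjoint_left]
  rintro p hp (hq | hq)
  · obtain ⟨t, ⟨h0, h1⟩, rfl⟩ := hp
    have hq : E.arc v w t = E.pos y := hq
    rcases h0.eq_or_lt with rfl | h0
    · rw [E.arc_zero h] at hq
      exact hv (E.pos_inj hq).symm
    · rcases h1.eq_or_lt with rfl | h1
      · rw [E.arc_one h] at hq
        exact hw (E.pos_inj hq).symm
      · exact E.arc_avoid h y ⟨t, ⟨h0, h1⟩, hq⟩
  · simp only [Set.mem_iUnion] at hq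
    obtain ⟨z, hz, t, ⟨h0, h1⟩, rfl⟩ := hq
    have hne : s(v, w) ≠ s(y, z) := by
      intro e
      have : y ∈ s(v, w) := by rw [e]; exact Sym2.mem_mk_left y z
      rw [Sym2.mem_iff] at this
      tauto
    have := (E.arc_meet h hz hne ⟨hp, t, ⟨h0, by linarith⟩, rfl⟩).1
    rcases this with e | e
    · exact ffStar_pos E hv (e ▸ ffStar_arc E hz h0 h1)
    · exact ffStar_pos E hw ((show _ = _ from e) ▸ ffStar_arc E hz h0 h1)

lemma ffStar_walk {ε : ℝ} (hε : 0 < ε) {u x : V} (p : G.Walk u x) :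
    ∀ h0 ∈ ffN ε (ffStar E u), ∀ h ∈ ffN ε (ffStar E x),
      ffConn (⋃ y ∈ {z | z ∈ p.support}, ffN ε (ffStar E y)) h0 h := by
  induction p with
  | nil =>
    intro h0 m0 h m
    refine (ffN_conn hε (ffStar_preconn E _) m0 m).mono ?_
    exact Set.subset_biUnion_of_mem (u := fun y => ffN ε (ffStar E y)) (by simp)
  | @cons u u' x hadj p ih =>
    intro h0 m0 h m
    obtain ⟨g, hg⟩ := ffN_near hε (E.arc u u' (1/2))
    have g1 : g ∈ ffN ε (ffStar E u) := ⟨_, ffStar_arc E hadj (by norm_num) le_rfl, hg⟩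
    have g2 : g ∈ ffN ε (ffStar E u') := by
      refine ⟨E.arc u' u (1/2), ffStar_arc E hadj.symm (by norm_num) le_rfl, ?_⟩
      rw [E.arc_symm hadj]
      convert hg using 3
      norm_num
    refine Relation.ReflTransGen.trans
      ((ffN_conn hε (ffStar_preconn E _) m0 g1).mono ?_) ((ih g g2 h m).mono ?_)
    · exact Set.subset_biUnion_of_mem (u := fun y => ffN ε (ffStar E y)) (by simp)
    · apply Set.biUnion_mono
      · intro y hy
        simp only [Set.mem_ofPred_eq, SimpleGraph.Walk.support_cons, List.mem_cons] at *
        exact Or.inr hy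
      · exact fun _ _ => le_rfl

end star

lemma ff_planar_separator {V : Type} [Fintype V] (G : SimpleGraph V) (hpl : IsPlanar G) (r : V)
    (p : ∀ x, G.Walk r x) :
    ∃ x x', ∀ v, v ∉ {z | z ∈ (p x).support} ∪ {z | z ∈ (p x').support} →
      3 * (ffComp G ({z | z ∈ (p x).support} ∪ {z | z ∈ (p x').support}) v).ncard <
        2 * Fintype.card V := by
  classical
  obtain ⟨E⟩ := hpl
  have e1 : ∀ t : V × V × V, ∃ δ > 0, ∀ ε, ε ≤ δ → G.Adj t.1 t.2.1 → t.2.2 ≠ t.1 →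
      t.2.2 ≠ t.2.1 →
      Disjoint (ffN ε (E.arc t.1 t.2.1 '' Set.Icc 0 1)) (ffN ε (ffStar E t.2.2)) := by
    rintro ⟨v, w, y⟩
    by_cases h : G.Adj v w ∧ y ≠ v ∧ y ≠ w
    · obtain ⟨δ, h1, h2⟩ := ffN_disjoint (isCompact_Icc.image (E.arc_cont h.1))
        (ffStar_compact E y) (ffStar_disj_arc E h.1 h.2.1 h.2.2)
      exact ⟨δ, h1, fun ε hε _ _ _ => h2 ε hε⟩
    · exact ⟨1, one_pos, fun ε _ a b c => absurd ⟨a, b, c⟩ h⟩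
  have e2 : ∀ t : V × V, ∃ δ > 0, ∀ ε, ε ≤ δ → t.2 ≠ t.1 →
      Disjoint (ffN ε {E.pos t.1}) (ffN ε (ffStar E t.2)) := by
    rintro ⟨v, y⟩
    by_cases h : y ≠ v
    · obtain ⟨δ, h1, h2⟩ := ffN_disjoint (isCompact_singleton (x := E.pos v))
        (ffStar_compact E y) (Set.disjoint_singleton_left.2 (ffStar_pos E h))
      exact ⟨δ, h1, fun ε hε _ => h2 ε hε⟩
    · exact ⟨1, one_pos, fun ε _ a => absurd a h⟩
  choose δ1 p1 H1 using e1
  choose δ2 p2 H2 using e2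
  have : Nonempty V := ⟨r⟩
  obtain ⟨t1, ht1⟩ := Finite.exists_min δ1
  obtain ⟨t2, ht2⟩ := Finite.exists_min δ2
  set ε := min (δ1 t1) (δ2 t2) with hεd
  have hε : 0 < ε := lt_min (p1 _) (p2 _)
  have l1 : ∀ t, ε ≤ δ1 t := fun t => (min_le_left _ _).trans (ht1 t)
  have l2 : ∀ t, ε ≤ δ2 t := fun t => (min_le_right _ _).trans (ht2 t)
  choose rep hrep using fun v => ffN_near hε (E.pos v)
  obtain ⟨N, hN⟩ := ffN_bdd hε (isCompact_iUnion (ffStar_compact E))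
  have hpos : ∀ v, E.pos v ∈ ffStar E v := fun v => Or.inl rfl
  refine ff_separator G r (fun x => {z | z ∈ (p x).support}) (fun x => ffN ε (ffStar E x)) rep N
    (fun x => (p x).start_mem_support) (fun v => ⟨_, hpos v, hrep v⟩) ?_ ?_ ?_ ?_
  · intro x h hh
    exact ffStar_walk E hε (p x) _ ⟨_, hpos r, hrep r⟩ h hh
  · intro v y hy
    exact Set.disjoint_left.1 (H2 (v, y) ε (l2 _) hy) ⟨_, rfl, hrep v⟩
  · intro v w hvw
    refine ⟨ffN ε (E.arc v w '' Set.Icc 0 1), ?_, fun y h1 h2 => H1 (v, w, y) ε (l1 _) hvw h1 h2,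
      ffN_conn hε (isPreconnected_Icc.image _ (E.arc_cont hvw).continuousOn)
        ⟨_, ⟨0, by norm_num, E.arc_zero hvw⟩, hrep v⟩ ⟨_, ⟨1, by norm_num, E.arc_one hvw⟩, hrep w⟩⟩
    rintro g ⟨k, hk, hd⟩
    rcases ffArc_sub E hvw hk with h | h
    · exact Or.inl ⟨k, h, hd⟩
    · exact Or.inr ⟨k, h, hd⟩
  · intro x h hh
    exact hN h (ffN_mono (Set.subset_iUnion _ x) hh)

/-! ## The strategy -/

lemma ff_geodesic {V : Type} {G : SimpleGraph V} (hc : G.Connected) {r x : V} (p : G.Walk r x)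
    (hp : p.length = G.dist r x) {z : V} (hz : z ∈ p.support) : z = p.getVert (G.dist r z) := by
  obtain ⟨k, rfl, hk⟩ := SimpleGraph.Walk.mem_support_iff_exists_getVert.1 hz
  have h1 : G.dist r (p.getVert k) ≤ k := by
    have := SimpleGraph.dist_le (p.take k)
    rw [SimpleGraph.Walk.take_length] at this
    omega
  have h2 : G.dist (p.getVert k) x ≤ p.length - k := by
    have := SimpleGraph.dist_le (p.drop k)
    rwa [SimpleGraph.Walk.drop_length] at this
  have h3 := hc.dist_triangle (u := r) (v := p.getVert k) (w := x)
  have : G.dist r (p.getVert k) = k := by omega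
  rw [this]

lemma ff_partition {V : Type} [Fintype V] (G : SimpleGraph V) (r : V) (S : Set V) (hr : r ∈ S)
    (hS : ∀ v, v ∉ S → 3 * (ffComp G S v).ncard < 2 * Fintype.card V) :
    ∃ A : Set V, Disjoint A S ∧ (∀ u w, u ∈ A → w ∉ S → G.Adj u w → w ∈ A) ∧
      3 * A.ncard < 2 * Fintype.card V ∧ 3 * ((A ∪ S)ᶜ).ncard < 2 * Fintype.card V := by
  classical
  have hpos : 0 < Fintype.card V := Fintype.card_pos_iff.2 ⟨r⟩
  let good : Set (Set V) := {A | Disjoint A S ∧ (∀ u w, u ∈ A → w ∉ S → G.Adj u w → w ∈ A) ∧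
      3 * A.ncard < 2 * Fintype.card V}
  have hne : good.Nonempty := ⟨∅, by simp, by simp, by simpa using hpos⟩
  obtain ⟨A, ⟨hA1, hA2, hA3⟩, hmax⟩ := Set.exists_max_image good Set.ncard (Set.toFinite _) hne
  refine ⟨A, hA1, hA2, hA3, ?_⟩
  by_contra hB
  push Not at hB
  have hBne : ((A ∪ S)ᶜ).Nonempty := by
    rw [← Set.ncard_pos]; omega
  obtain ⟨v, hv⟩ := hBne
  simp only [Set.mem_compl_iff, Set.mem_union, not_or] at hv
  have c1 : Disjoint (ffComp G S v) S :=
    Set.disjoint_left.2 fun w hw => ffComp_not_mem hv.2 hw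
  have c2 : ∀ u w, u ∈ ffComp G S v → w ∉ S → G.Adj u w → w ∈ ffComp G S v := by
    intro u w hu hw ha
    exact Relation.ReflTransGen.tail hu ⟨ha, ffComp_not_mem hv.2 hu, hw⟩
  have m1 := hmax _ ⟨c1, c2, hS v hv.2⟩
  have hlt : A.ncard < (A ∪ ffComp G S v).ncard := by
    refine Set.ncard_lt_ncard ?_
    refine ⟨Set.subset_union_left, fun h => hv.1 (h (Or.inr Relation.ReflTransGen.refl))⟩
  have hle := Set.ncard_union_le A (ffComp G S v)
  have hbig : 2 * Fintype.card V ≤ 3 * (A ∪ ffComp G S v).ncard := by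
    by_contra hh
    push Not at hh
    have := hmax (A ∪ ffComp G S v) ⟨hA1.union_left c1, ?_, hh⟩
    · omega
    · rintro u w (hu | hu) hw ha
      · exact Or.inl (hA2 u w hu hw ha)
      · exact Or.inr (c2 u w hu hw ha)
  have htot : A.ncard + S.ncard + ((A ∪ S)ᶜ).ncard = Fintype.card V := by
    rw [← Set.ncard_union_eq hA1, Set.ncard_add_ncard_compl, Nat.card_eq_fintype_card]
  have hSp : 0 < S.ncard := (Set.ncard_pos).2 ⟨r, hr⟩
  omega

/-- Burned vertices are within distance `t`. -/
lemma ff_burned_dist {V : Type} {G : SimpleGraph V} (hc : G.Connected) (r : V) (P : ℕ → Set V)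
    (t : ℕ) : ∀ w ∈ burnedSet G r P t, G.dist r w ≤ t := by
  induction t with
  | zero => intro w hw; rw [show w = r from hw]; simp
  | succ t ih =>
    rintro w (hw | ⟨⟨u, hu, ha⟩, _⟩)
    · exact (ih w hw).trans (Nat.le_succ t)
    · have := ih u hu
      have h3 := hc.dist_triangle (u := r) (v := u) (w := w)
      rw [SimpleGraph.dist_eq_one_iff_adj.2 ha] at h3
      omega

/-- Main strategy lemma. -/
lemma ff_strategy {V : Type} [Fintype V] (G : SimpleGraph V) [DecidableRel G.Adj]
    (hc : G.Connected) (r : V) (b : ℕ → ℕ) (S A : Set V) (hr : r ∈ S) (hA : Disjoint A S)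
    (hlev : ∀ t, {z | z ∈ S ∧ G.dist r z = t + 1}.ncard ≤ 2)
    (hb : ∀ t, t ≠ 0 → b t = 2) (hb0 : b 0 = (2 + ((G.degree r : ℤ) - 2) / 2).toNat)
    (hcl : ∀ u w, u ∈ A → w ∉ S → G.Adj u w → w ∈ A)
    (hdeg : {z | z ∈ A ∧ G.Adj r z}.ncard ≤ {z | z ∈ (A ∪ S)ᶜ ∧ G.Adj r z}.ncard)
    (hB : 3 * ((A ∪ S)ᶜ).ncard < 2 * Fintype.card V) :
    (sn G b r : ℝ) > (Fintype.card V : ℝ) / 3 - 1 := by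
  classical
  let P : ℕ → Set V := fun t =>
    {z | z ∈ S ∧ G.dist r z = t + 1} ∪ {z | t = 0 ∧ z ∈ A ∧ G.Adj r z}
  have hdistA : ∀ z, G.Adj r z ↔ G.dist r z = 1 := fun z =>
    SimpleGraph.dist_eq_one_iff_adj.symm
  have hbd := ff_burned_dist hc r P
  have hPd : ∀ t z, z ∈ P t → G.dist r z = t + 1 := by
    rintro t z (h | ⟨rfl, _, h⟩)
    · exact h.2
    · exact (hdistA z).1 h
  have hvalid : ValidStrategy G b r P := by
    intro t
    refine ⟨Set.toFinite _, ?_, ?_⟩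
    · by_cases ht : t = 0
      · subst ht
        rw [hb0]
        have e1 : P 0 = {z | z ∈ S ∧ G.dist r z = 0 + 1} ∪ {z | z ∈ A ∧ G.Adj r z} := by
          ext z; simp [P]
        have hle := Set.ncard_union_le {z | z ∈ S ∧ G.dist r z = 0 + 1} {z | z ∈ A ∧ G.Adj r z}
        rw [← e1] at hle
        have hl := hlev 0
        have hdg : {z | z ∈ S ∧ G.dist r z = 0 + 1}.ncard + {z | z ∈ A ∧ G.Adj r z}.ncard +
            {z | z ∈ (A ∪ S)ᶜ ∧ G.Adj r z}.ncard = G.degree r := by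
          have d1 : Disjoint {z | z ∈ S ∧ G.dist r z = 0 + 1} {z | z ∈ A ∧ G.Adj r z} :=
            Set.disjoint_left.2 fun z h1 h2 => Set.disjoint_left.1 hA h2.1 h1.1
          have d2 : Disjoint ({z | z ∈ S ∧ G.dist r z = 0 + 1} ∪ {z | z ∈ A ∧ G.Adj r z})
              {z | z ∈ (A ∪ S)ᶜ ∧ G.Adj r z} := by
            rw [Set.disjoint_left]
            rintro z (h1 | h1) h2
            · exact h2.1 (Or.inr h1.1)
            · exact h2.1 (Or.inl h1.1)
          rw [← Set.ncard_union_eq d1, ← Set.ncard_union_eq d2,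
            ← SimpleGraph.card_neighborFinset_eq_degree, ← Set.ncard_coe_finset]
          congr 1
          ext z
          simp only [zero_add, ← hdistA, SimpleGraph.coe_neighborFinset,
            SimpleGraph.mem_neighborSet, Set.mem_union, Set.mem_ofPred_eq, Set.mem_compl_iff]
          tauto
        omega
      · rw [hb t ht]
        have : P t = {z | z ∈ S ∧ G.dist r z = t + 1} := by
          ext z; simp [P, ht]
        rw [this]; exact hlev t
    · rw [Set.disjoint_left]
      intro z hz hz'
      have := hPd t z hz
      have := hbd t z hz'
      omega
  have hburn : ∀ t, burnedSet G r P t ⊆ insert r (A ∪ S)ᶜ := by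
    intro t
    induction t with
    | zero => intro z hz; exact Or.inl hz
    | succ t ih =>
      rintro w (hw | ⟨⟨u, hu, ha⟩, hw⟩)
      · exact ih hw
      · by_contra hcon
        simp only [Set.mem_insert_iff, Set.mem_compl_iff, Set.mem_union, not_or] at hcon
        obtain ⟨hwr, hwA⟩ := hcon
        have hwA : w ∈ A ∨ w ∈ S := by tauto
        have hdw : G.dist r w ≤ t + 1 := ff_burned_dist hc r P (t+1) w (Or.inr ⟨⟨u, hu, ha⟩, hw⟩)
        have hd0 : G.dist r w ≠ 0 := fun h => hwr (hc.dist_eq_zero_iff.1 h).symm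
        rcases hwA with hwA | hwS
        · rcases ih hu with rfl | hu'
          · exact hw 0 (Nat.zero_le _) (Or.inr ⟨rfl, hwA, ha⟩)
          · exact hu' (Or.inl (hcl w u hwA (fun h => hu' (Or.inr h)) ha.symm))
        · exact hw (G.dist r w - 1) (by omega) (Or.inl ⟨hwS, by omega⟩)
  have hsave : (insert r (A ∪ S)ᶜ)ᶜ ⊆ {w : V | ∀ t, w ∉ burnedSet G r P t} :=
    fun w hw t h => hw (hburn t h)
  have hcard : Fintype.card V ≤
      Nat.card {w : V | ∀ t, w ∉ burnedSet G r P t} + (((A ∪ S)ᶜ).ncard + 1) := by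
    have h1 := Set.ncard_le_ncard hsave
    have h2 := Set.ncard_add_ncard_compl (insert r (A ∪ S)ᶜ)
    have h3 := Set.ncard_insert_le r (A ∪ S)ᶜ
    rw [Nat.card_eq_fintype_card] at h2
    have h4 : Nat.card {w : V | ∀ t, w ∉ burnedSet G r P t} =
      Set.ncard {w : V | ∀ t, w ∉ burnedSet G r P t} := Nat.card_coe_set_eq _
    omega
  have hsn : Nat.card {w : V | ∀ t, w ∉ burnedSet G r P t} ≤ sn G b r := by
    apply le_csSup
    · refine ⟨Fintype.card V, ?_⟩
      rintro m ⟨Q, _, rfl⟩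
      rw [← Nat.card_eq_fintype_card]
      exact Nat.card_le_card_of_injective _ Subtype.val_injective
    · exact ⟨P, hvalid, rfl⟩
  have hfin : Fintype.card V < 3 * sn G b r + 3 := by omega
  have : (Fintype.card V : ℝ) < 3 * sn G b r + 3 := by exact_mod_cast hfin
  linarith

/-- Lemma 2.2: in a connected plane graph on `n ≥ 5` vertices with a fire starting at
`r`, using `2 + ⌊(deg r - 2)/2⌋` firefighters in the first round and `2` in each
subsequent round, one can save more than `n/3 - 1` vertices. -/
theorem save_third_with_boosted_first_round {V : Type} [Fintype V] (G : SimpleGraph V)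
    [DecidableRel G.Adj] (hconn : G.Connected) (hplanar : IsPlanar G)
    (hn : 5 ≤ Fintype.card V) (r : V) :
    ((sn G (fun t => if t = 0 then (2 + ((G.degree r : ℤ) - 2) / 2).toNat else 2) r : ℝ)) >
      (Fintype.card V : ℝ) / 3 - 1 := by
  classical
  choose p hp using fun x => hconn.exists_walk_length_eq_dist r x
  obtain ⟨x, x', hsep⟩ := ff_planar_separator G hplanar r p
  set S : Set V := {z | z ∈ (p x).support} ∪ {z | z ∈ (p x').support} with hSd
  have hrS : r ∈ S := Or.inl (p x).start_mem_support
  obtain ⟨A, hA1, hA2, hA3, hA4⟩ := ff_partition G r S hrS hsep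
  have hlev : ∀ t, {z | z ∈ S ∧ G.dist r z = t + 1}.ncard ≤ 2 := by
    intro t
    have hsub : {z | z ∈ S ∧ G.dist r z = t + 1} ⊆
        {(p x).getVert (t + 1), (p x').getVert (t + 1)} := by
      rintro z ⟨hz | hz, hd⟩
      · left; rw [← hd]; exact ff_geodesic hconn (p x) (hp x) hz
      · right; rw [← hd]; exact ff_geodesic hconn (p x') (hp x') hz
    exact (Set.ncard_le_ncard hsub).trans ((Set.ncard_insert_le _ _).trans (by rw [Set.ncard_singleton]))
  rcases le_total {z | z ∈ A ∧ G.Adj r z}.ncard {z | z ∈ (A ∪ S)ᶜ ∧ G.Adj r z}.ncard with h | h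
  · exact ff_strategy G hconn r _ S A hrS hA1 hlev (fun t ht => if_neg ht) rfl hA2 h hA4
  · have hAA : ((A ∪ S)ᶜ ∪ S)ᶜ = A := by
      ext z
      have : z ∈ A → z ∉ S := fun h => Set.disjoint_left.1 hA1 h
      simp only [Set.mem_compl_iff, Set.mem_union]
      tauto
    refine ff_strategy G hconn r _ S (A ∪ S)ᶜ hrS ?_ hlev (fun t ht => if_neg ht) rfl ?_ ?_ ?_
    · exact Set.disjoint_left.2 fun z h1 h2 => h1 (Or.inr h2)
    · intro u w hu hw ha hwA
      rcases hwA with hwA | hwA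
      · exact hu (Or.inl (hA2 w u hwA (fun h => hu (Or.inr h)) ha.symm))
      · exact hw hwA
    · rw [hAA]; exact h
    · rw [hAA]; exact hA3
end

section
/- Let G be a connected planar graph on n ≥ 2 vertices with average degree less than 4 and having at least 2 vertices of degree lower than 4. Then ρ_{3,2}(G) ≥ 1/3, where ρ_{3,2}(G) is the surviving rate when firefighters may protect 3 vertices in the first round and 2 vertices in each subsequent round. -/
namespace FF
open Classical

/-- Edges of the triangular lattice on `ℕ × ℕ`. -/
inductive Ed where
  | h (i j : ℕ) : Ed
  | v (i j : ℕ) : Ed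
  | d (i j : ℕ) : Ed

/-- First end of a lattice edge. -/
def Ed.a : Ed → ℕ × ℕ
  | .h i j => (i, j)
  | .v i j => (i, j)
  | .d i j => (i + 1, j)

/-- Second end of a lattice edge. -/
def Ed.b : Ed → ℕ × ℕ
  | .h i j => (i + 1, j)
  | .v i j => (i, j + 1)
  | .d i j => (i, j + 1)

/-- Faces (triangles) of the triangular lattice. -/
inductive Fc where
  | U (i j : ℕ) : Fc
  | D (i j : ℕ) : Fc

/-- Chains mod 2. -/
abbrev Ch := Ed → ZMod 2

/-- Boundary of a chain at the point `(i+1, j+1)`. -/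
def bd (c : Ch) (i j : ℕ) : ZMod 2 :=
  c (.h (i+1) (j+1)) + c (.h i (j+1)) + c (.v (i+1) (j+1)) + c (.v (i+1) j)
    + c (.d i (j+1)) + c (.d (i+1) j)

/-- The one-edge chain. -/
noncomputable def sg (e : Ed) : Ch := fun e' => if e' = e then 1 else 0

/-- Indicator of a point. -/
noncomputable def ind (p : ℕ × ℕ) (i j : ℕ) : ZMod 2 := if p = (i+1, j+1) then 1 else 0

lemma bd_add (c c' : Ch) (i j : ℕ) : bd (c + c') i j = bd c i j + bd c' i j := by
  simp only [bd, Pi.add_apply]; ring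

lemma bd_sg (e : Ed) (i j : ℕ) : bd (sg e) i j = ind e.a i j + ind e.b i j := by
  cases e <;> simp only [bd, sg, ind, Ed.a, Ed.b, Prod.mk.injEq, Ed.h.injEq, Ed.v.injEq,
    Ed.d.injEq, reduceCtorEq, if_false, zero_add, add_zero]
  · rename_i a b
    congr 1 <;> congr 1 <;> apply propext <;> omega
  · rename_i a b
    congr 1 <;> congr 1 <;> apply propext <;> omega
  · rename_i a b
    congr 1 <;> congr 1 <;> apply propext <;> omega

/-- Side function of a chain (parity of crossings with a horizontal ray). -/
def sd (c : Ch) : Fc → ZMod 2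
  | .U i j => (∑ k ∈ Finset.range i, (c (.v k j) + c (.d k j))) + c (.v i j)
  | .D i j => ∑ k ∈ Finset.range (i+1), (c (.v k j) + c (.d k j))

lemma sd_add (c c' : Ch) (t : Fc) : sd (c + c') t = sd c t + sd c' t := by
  cases t <;> simp only [sd, Pi.add_apply]
  · rename_i i j
    rw [show (∑ k ∈ Finset.range i, (c (.v k j) + c' (.v k j) + (c (.d k j) + c' (.d k j))))
      = ∑ k ∈ Finset.range i, ((c (.v k j) + c (.d k j)) + (c' (.v k j) + c' (.d k j))) from
      Finset.sum_congr rfl (fun _ _ => by ring), Finset.sum_add_distrib]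
    ring
  · rename_i i j
    rw [← Finset.sum_add_distrib]
    exact Finset.sum_congr rfl (fun _ _ => by ring)

lemma z2 (x : ZMod 2) : x + x = 0 := CharTwo.add_self_eq_zero x

/-- closed chains living in the positive quadrant -/
def Closed (c : Ch) : Prop :=
  (∀ i j, bd c i j = 0) ∧ ∀ j, c (.h 0 j) = 0 ∧ c (.v 0 j) = 0 ∧ c (.d 0 j) = 0

lemma sd_d (c : Ch) (i j : ℕ) : sd c (.U i j) + sd c (.D i j) = c (.d i j) := by
  simp only [sd, Finset.sum_range_succ]
  linear_combination z2 (∑ k ∈ Finset.range i, (c (.v k j) + c (.d k j))) + z2 (c (.v i j))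

lemma sd_v (c : Ch) (i j : ℕ) : sd c (.U (i+1) j) + sd c (.D i j) = c (.v (i+1) j) := by
  simp only [sd]
  linear_combination z2 (∑ k ∈ Finset.range (i+1), (c (.v k j) + c (.d k j)))

lemma sd_h (c : Ch) (hc : Closed c) (i j : ℕ) :
    sd c (.U i (j+1)) + sd c (.D i j) = c (.h i (j+1)) := by
  induction i with
  | zero => simp [sd, hc.2]
  | succ i ih =>
    have h1 := hc.1 i j
    simp only [bd] at h1
    simp only [sd, Finset.sum_range_succ] at ih ⊢
    have e1 := z2 (c (.h (i+1) (j+1)))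
    linear_combination ih + h1 - e1

/-- The relation that two faces are the two sides of an edge. -/
inductive Cross : Fc → Ed → Fc → Prop
  | h1 (i j) : Cross (.U i (j+1)) (.h i (j+1)) (.D i j)
  | h2 (i j) : Cross (.D i j) (.h i (j+1)) (.U i (j+1))
  | v1 (i j) : Cross (.U (i+1) j) (.v (i+1) j) (.D i j)
  | v2 (i j) : Cross (.D i j) (.v (i+1) j) (.U (i+1) j)
  | d1 (i j) : Cross (.U i j) (.d i j) (.D i j)
  | d2 (i j) : Cross (.D i j) (.d i j) (.U i j)

lemma sd_cross {c : Ch} (hc : Closed c) {t t' : Fc} {e : Ed} (h : Cross t e t') :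
    sd c t + sd c t' = c e := by
  cases h with
  | h1 i j => exact sd_h c hc i j
  | h2 i j => rw [add_comm]; exact sd_h c hc i j
  | v1 i j => exact sd_v c i j
  | v2 i j => rw [add_comm]; exact sd_v c i j
  | d1 i j => exact sd_d c i j
  | d2 i j => rw [add_comm]; exact sd_d c i j

lemma Cross.symm {t t' : Fc} {e : Ed} (h : Cross t e t') : Cross t' e t := by
  cases h <;> constructor

/-- if two faces are both at `e`, -/
lemma Cross.of_same {t t' u u' : Fc} {e : Ed} (h : Cross t e t') (h' : Cross u e u') :
    (u = t ∧ u' = t') ∨ (u = t' ∧ u' = t) := by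
  cases h <;> cases h' <;> simp

lemma eq_of_add {x y : ZMod 2} (h : x + y = 0) : x = y := by
  have := z2 y
  linear_combination h - this

/-- The chain vanishes on the edges at the point `p`. -/
def Off (c : Ch) (p : ℕ × ℕ) : Prop := ∀ e : Ed, (e.a = p ∨ e.b = p) → c e = 0

/-- The chosen face at a point. -/
def fU (p : ℕ × ℕ) : Fc := .U p.1 p.2

lemma star {c : Ch} (hc : Closed c) {i j : ℕ} (ho : Off c (i+1, j+1)) :
    sd c (.U i (j+1)) = sd c (.U (i+1) (j+1)) ∧ sd c (.U (i+1) j) = sd c (.U (i+1) (j+1)) := by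
  have a1 := sd_v c i (j+1)
  have a2 := sd_d c i (j+1)
  have a3 := sd_h c hc i j
  have a4 := sd_v c i j
  rw [ho _ (by simp [Ed.a])] at a1
  rw [ho _ (by simp [Ed.a])] at a2
  rw [ho _ (by simp [Ed.b])] at a3
  rw [ho _ (by simp [Ed.b])] at a4
  have a1 := eq_of_add a1
  have a2 := eq_of_add a2
  have a3 := eq_of_add a3
  have a4 := eq_of_add a4
  constructor
  · rw [a2, a1]
  · rw [a4, ← a3, a2, a1]

lemma side_adj {c : Ch} (hc : Closed c) {e : Ed} (h1 : 1 ≤ e.a.1) (h2 : 1 ≤ e.a.2)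
    (h3 : 1 ≤ e.b.1) (h4 : 1 ≤ e.b.2)
    (ha : Off c e.a) (hb : Off c e.b) : sd c (fU e.a) = sd c (fU e.b) := by
  cases e with
  | h i j =>
    simp only [Ed.a, Ed.b, fU] at *
    obtain ⟨j, rfl⟩ : ∃ k, j = k + 1 := ⟨j-1, by omega⟩
    exact (star hc hb).1
  | v i j =>
    simp only [Ed.a, Ed.b, fU] at *
    obtain ⟨i, rfl⟩ : ∃ k, i = k + 1 := ⟨i-1, by omega⟩
    exact (star hc hb).2
  | d i j =>
    simp only [Ed.a, Ed.b, fU] at *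
    obtain ⟨i, rfl⟩ : ∃ k, i = k + 1 := ⟨i-1, by omega⟩
    obtain ⟨j, rfl⟩ : ∃ k, j = k + 1 := ⟨j-1, by omega⟩
    rw [← (star hc ha).1, ← (star hc hb).2]

/-- the three edges of a face -/
def Fc.edge : Fc → Fin 3 → Ed
  | .U i j => ![.h i j, .v i j, .d i j]
  | .D i j => ![.d i j, .h i (j+1), .v (i+1) j]

lemma sd_bdry (t F : Fc) :
    sd (sg (t.edge 0) + sg (t.edge 1) + sg (t.edge 2)) F = if F = t then 1 else 0 := by
  have key : ∀ (m i : ℕ), (∑ k ∈ Finset.range m, (if k = i then (1:ZMod 2) else 0))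
      = if i < m then 1 else 0 := by
    intro m i; simp [Finset.sum_ite_eq']
  rw [sd_add, sd_add]
  cases t with
  | U i j => 
    cases F with
    | U a b =>
      simp only [Fc.edge, sd, sg]
      by_cases hb : b = j
      · subst hb
        simp [key]
        rcases lt_trichotomy a i with h | h | h
        · simp [h.ne, h.not_gt]
        · simp [h]
        · simp [h.ne', h, CharTwo.add_self_eq_zero]
      · simp [hb]
    | D a b =>
      simp only [Fc.edge, sd, sg]
      by_cases hb : b = j
      · subst hb
        simp [key, CharTwo.add_self_eq_zero]
      · simp [hb]
  | D i j => 
    cases F with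
    | U a b =>
      simp only [Fc.edge, sd, sg]
      by_cases hb : b = j
      · subst hb
        simp [key]
        rcases lt_trichotomy a (i+1) with h | h | h
        · simp [h.ne, h.not_gt]; omega
        · simp [h, CharTwo.add_self_eq_zero]
        · rw [if_pos (by omega), if_pos (by omega), if_neg (by omega)]; simp [CharTwo.add_self_eq_zero]
      · simp [hb]
    | D a b =>
      simp only [Fc.edge, sd, sg]
      by_cases hb : b = j
      · subst hb
        simp [key]
        rcases lt_trichotomy a i with h | h | h
        · simp [h.ne, h.not_gt]; omega
        · simp [h]
        · rw [if_pos (by omega), if_pos (by omega), if_neg (by omega)]; simp [CharTwo.add_self_eq_zero]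
      · simp [hb]

end FF

namespace FF
open Classical

/-- Connectivity of a set of lattice points using the edges in `E`. -/
def Conn (E : Set Ed) (A : Set (ℕ × ℕ)) : Prop :=
  ∀ S : Set (ℕ × ℕ), (∃ p ∈ A, p ∈ S) →
    (∀ e ∈ E, e.a ∈ A → e.b ∈ A → (e.a ∈ S ↔ e.b ∈ S)) → A ⊆ S

/-- partial spanning tree data on `Y` -/
def TreeOn (E : Set Ed) (Y : Set (ℕ × ℕ)) (q : ℕ × ℕ) (P : ℕ × ℕ → Ch) (τ : Set Ed) : Prop :=
  P q = 0 ∧ τ ⊆ E ∧ (∀ e ∈ τ, e.a ∈ Y ∧ e.b ∈ Y ∧ P e.a + P e.b = sg e) ∧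
    ∀ x ∈ Y, (∀ i j, bd (P x) i j = ind x i j + ind q i j) ∧ ∀ e, P x e ≠ 0 → e ∈ τ

lemma ch2 (c : Ch) : c + c = 0 := by funext e; exact z2 (c e)

lemma Ed.ne (e : Ed) : e.a ≠ e.b := by cases e <;> simp [Ed.a, Ed.b]

lemma spanTree (E : Set Ed) (A : Set (ℕ × ℕ)) (hA : A.Finite) (hc : Conn E A) (q : ℕ × ℕ)
    (hq : q ∈ A) : ∃ P τ, TreeOn E A q P τ := by
  have main : ∀ n : ℕ, ∃ Y : Set (ℕ × ℕ), Y ⊆ A ∧ q ∈ Y ∧ (Y = A ∨ n ≤ Y.ncard) ∧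
      ∃ P τ, TreeOn E Y q P τ := by
    intro n
    induction n with
    | zero =>
      refine ⟨{q}, by simpa using hq, rfl, Or.inr (Nat.zero_le _), fun _ => 0, ∅, rfl, by simp,
        by simp, ?_⟩
      rintro x rfl
      refine ⟨fun i j => ?_, by simp⟩
      rw [z2]; simp [bd]
    | succ n ih =>
      obtain ⟨Y, hYA, hqY, hY, P, τ, hP⟩ := ih
      by_cases hYe : Y = A
      · exact ⟨Y, hYA, hqY, Or.inl hYe, P, τ, hP⟩
      have hn : n ≤ Y.ncard := hY.resolve_left hYe
      have hex : ∃ e ∈ E, e.a ∈ A ∧ e.b ∈ A ∧ ¬ (e.a ∈ Y ↔ e.b ∈ Y) := by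
        by_contra hcon
        push Not at hcon
        exact hYe (hYA.antisymm (hc Y ⟨q, hq, hqY⟩ hcon))
      have hex2 : ∃ e ∈ E, ∃ x y, ((e.a = x ∧ e.b = y) ∨ (e.a = y ∧ e.b = x)) ∧ x ∈ A ∧ x ∉ Y ∧ y ∈ Y := by
        obtain ⟨e, he, ha, hb, hh⟩ := hex
        by_cases h : e.a ∈ Y
        · exact ⟨e, he, e.b, e.a, Or.inr ⟨rfl, rfl⟩, hb, by tauto, h⟩
        · exact ⟨e, he, e.a, e.b, Or.inl ⟨rfl, rfl⟩, ha, h, by tauto⟩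
      obtain ⟨e, he, x, y, hxy, hxA, hxY, hyY⟩ := hex2
      have hYf : Y.Finite := hA.subset hYA
      have hxney : x ≠ y := fun h => hxY (h ▸ hyY)
      have hqx : q ≠ x := fun h => hxY (h ▸ hqY)
      obtain ⟨h1, h2, h3, h4⟩ := hP
      have hupd : ∀ z ∈ Y, Function.update P x (sg e + P y) z = P z := by
        intro z hz
        exact Function.update_of_ne (by rintro rfl; exact hxY hz) _ _
      refine ⟨insert x Y, Set.insert_subset hxA hYA, Set.mem_insert_of_mem _ hqY, Or.inr ?_,
        Function.update P x (sg e + P y), insert e τ, ?_, ?_, ?_, ?_⟩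
      · rw [Set.ncard_insert_of_notMem hxY hYf]; omega
      · rw [hupd q hqY]; exact h1
      · exact Set.insert_subset he h2
      · rintro f (rfl | hf)
        · have hs : Function.update P x (sg f + P y) x + Function.update P x (sg f + P y) y = sg f := by
            rw [hupd y hyY, Function.update_self, add_assoc, ch2, add_zero]
          rcases hxy with ⟨ha, hb⟩ | ⟨ha, hb⟩
          · rw [ha, hb]
            exact ⟨Set.mem_insert _ _, Set.mem_insert_of_mem _ hyY, hs⟩
          · rw [ha, hb]
            exact ⟨Set.mem_insert_of_mem _ hyY, Set.mem_insert _ _, by rw [add_comm]; exact hs⟩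
        · obtain ⟨ha, hb, hs⟩ := h3 f hf
          refine ⟨Set.mem_insert_of_mem _ ha, Set.mem_insert_of_mem _ hb, ?_⟩
          rw [hupd _ ha, hupd _ hb, hs]
      · rintro z (rfl | hz)
        · rw [Function.update_self]
          refine ⟨fun i j => ?_, fun f hf => ?_⟩
          · rw [bd_add, bd_sg, (h4 y hyY).1]
            have := z2 (ind y i j)
            rcases hxy with ⟨ha, hb⟩ | ⟨ha, hb⟩
            · rw [ha, hb]; linear_combination this
            · rw [ha, hb]; linear_combination this
          · by_cases hfe : f = e
            · exact Or.inl hfe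
            · right
              apply (h4 y hyY).2
              simpa [sg, hfe] using hf
        · rw [hupd z hz]
          exact ⟨(h4 z hz).1, fun f hf => Or.inr ((h4 z hz).2 f hf)⟩
  obtain ⟨Y, hYA, hqY, hY, P, τ, hP⟩ := main (A.ncard + 1)
  have : Y = A := by
    rcases hY with h | h
    · exact h
    · have := Set.ncard_le_ncard hYA hA
      omega
  subst this
  exact ⟨P, τ, hP⟩

/-- inside faces of the box `{1..N}²` -/
def Ins (N : ℕ) : Fc → Prop
  | .U i j => 1 ≤ i ∧ 1 ≤ j ∧ i < N ∧ j < N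
  | .D i j => 1 ≤ i ∧ 1 ≤ j ∧ i < N ∧ j < N

/-- boundary edges of the box -/
def Bdy (N : ℕ) : Ed → Prop
  | .h i j => 1 ≤ i ∧ i < N ∧ (j = 1 ∨ j = N)
  | .v i j => 1 ≤ j ∧ j < N ∧ (i = 1 ∨ i = N)
  | .d _ _ => False

lemma ins_finite (N : ℕ) : {t | Ins N t}.Finite := by
  have : {t | Ins N t} ⊆ (fun p : ℕ × ℕ => Fc.U p.1 p.2) '' (Set.Iio N ×ˢ Set.Iio N) ∪
      (fun p : ℕ × ℕ => Fc.D p.1 p.2) '' (Set.Iio N ×ˢ Set.Iio N) := by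
    rintro (⟨i, j⟩ | ⟨i, j⟩) h
    · left; exact ⟨(i, j), ⟨h.2.2.1, h.2.2.2⟩, rfl⟩
    · right; exact ⟨(i, j), ⟨h.2.2.1, h.2.2.2⟩, rfl⟩
  refine Set.Finite.subset ?_ this
  have := (Set.finite_Iio N).prod (Set.finite_Iio N)
  exact (this.image _).union (this.image _)

lemma cross_inside {N : ℕ} {t : Fc} (ht : Ins N t) (k : Fin 3) (hk : ¬ Bdy N (t.edge k)) :
    ∃ t', Ins N t' ∧ Cross t (t.edge k) t' := by
  cases t with
  | U i j =>
    obtain ⟨h1, h2, h3, h4⟩ := ht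
    obtain ⟨i, rfl⟩ : ∃ k, i = k + 1 := ⟨i-1, by omega⟩
    obtain ⟨j, rfl⟩ : ∃ k, j = k + 1 := ⟨j-1, by omega⟩
    fin_cases k
    · simp [Fc.edge, Bdy] at hk
      exact ⟨.D (i+1) j, ⟨by omega, by omega, by omega, by omega⟩, .h1 _ _⟩
    · simp [Fc.edge, Bdy] at hk
      exact ⟨.D i (j+1), ⟨by omega, by omega, by omega, by omega⟩, .v1 _ _⟩
    · exact ⟨.D (i+1) (j+1), ⟨by omega, by omega, by omega, by omega⟩, .d1 _ _⟩
  | D i j =>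
    obtain ⟨h1, h2, h3, h4⟩ := ht
    fin_cases k
    · exact ⟨.U i j, ⟨by omega, by omega, by omega, by omega⟩, .d2 _ _⟩
    · simp [Fc.edge, Bdy] at hk
      exact ⟨.U i (j+1), ⟨by omega, by omega, by omega, by omega⟩, .h2 _ _⟩
    · simp [Fc.edge, Bdy] at hk
      exact ⟨.U (i+1) j, ⟨by omega, by omega, by omega, by omega⟩, .v2 _ _⟩

lemma sd_const {N : ℕ} {c : Ch} (hc : Closed c) (hb : ∀ e, c e ≠ 0 → Bdy N e) :
    ∀ t, Ins N t → sd c t = sd c (.U 1 1) := by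
  have hd : ∀ i j, sd c (.D i j) = sd c (.U i j) := by
    intro i j
    have := sd_d c i j
    rw [show c (.d i j) = 0 by by_contra h; exact hb _ h] at this
    exact (eq_of_add this).symm
  have hrow : ∀ i j, 1 ≤ i → i < N → sd c (.U i j) = sd c (.U 1 j) := by
    intro i j hi
    induction i, hi using Nat.le_induction with
    | base => intro _; rfl
    | succ i hi ih =>
      intro hN
      have := sd_v c i j
      rw [show c (.v (i+1) j) = 0 by
        by_contra h; have := hb _ h; simp [Bdy] at this; omega] at this
      rw [eq_of_add this, hd, ih (by omega)]
  have hcol : ∀ j, 1 ≤ j → j < N → sd c (.U 1 j) = sd c (.U 1 1) := by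
    intro j hj
    induction j, hj using Nat.le_induction with
    | base => intro _; rfl
    | succ j hj ih =>
      intro hN
      have := sd_h c hc 1 j
      rw [show c (.h 1 (j+1)) = 0 by
        by_contra h; have := hb _ h; simp [Bdy] at this; omega] at this
      rw [eq_of_add this, hd, ih (by omega)]
  rintro (⟨i, j⟩ | ⟨i, j⟩) ⟨h1, h2, h3, h4⟩
  · rw [hrow i j h1 h3, hcol j h2 h4]
  · rw [hd, hrow i j h1 h3, hcol j h2 h4]

/-- the ring of the box -/
def Ring (N : ℕ) : Set (ℕ × ℕ) :=
  {p | (1 ≤ p.1 ∧ 1 ≤ p.2 ∧ p.1 ≤ N ∧ p.2 ≤ N) ∧ (p.1 = 1 ∨ p.1 = N ∨ p.2 = 1 ∨ p.2 = N)}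

lemma ring_conn (N : ℕ) (hN : 1 ≤ N) : Conn {e | Bdy N e} (Ring N) := by
  intro S ⟨p, hp, hpS⟩ hS
  have hh : ∀ i j, 1 ≤ i → i < N → (j = 1 ∨ j = N) → ((i, j) ∈ S ↔ (i+1, j) ∈ S) := by
    intro i j h1 h2 h3
    refine hS (.h i j) ⟨h1, h2, h3⟩ ?_ ?_ <;> simp only [Ring, Ed.a, Ed.b, Set.mem_ofPred_eq] <;> omega
  have hv : ∀ i j, 1 ≤ j → j < N → (i = 1 ∨ i = N) → ((i, j) ∈ S ↔ (i, j+1) ∈ S) := by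
    intro i j h1 h2 h3
    refine hS (.v i j) ⟨h1, h2, h3⟩ ?_ ?_ <;> simp only [Ring, Ed.a, Ed.b, Set.mem_ofPred_eq] <;> omega
  have hh' : ∀ i j, 1 ≤ i → i ≤ N → (j = 1 ∨ j = N) → ((i, j) ∈ S ↔ (1, j) ∈ S) := by
    intro i j hi
    induction i, hi using Nat.le_induction with
    | base => intros; rfl
    | succ i hi ih =>
      intro h1 h2
      rw [← hh i j hi (by omega) h2, ih (by omega) h2]
  have hv' : ∀ i j, 1 ≤ j → j ≤ N → (i = 1 ∨ i = N) → ((i, j) ∈ S ↔ (i, 1) ∈ S) := by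
    intro i j hi
    induction j, hi using Nat.le_induction with
    | base => intros; rfl
    | succ j hi ih =>
      intro h1 h2
      rw [← hv i j hi (by omega) h2, ih (by omega) h2]
  have all : ∀ p ∈ Ring N, (p ∈ S ↔ ((1:ℕ), (1:ℕ)) ∈ S) := by
    rintro ⟨i, j⟩ ⟨⟨h1, h2, h3, h4⟩, h | h | h | h⟩ <;> dsimp only at *
    · subst h; rw [hv' 1 j h2 h4 (Or.inl rfl)]
    · subst h; rw [hv' i j h2 h4 (Or.inr rfl), hh' i 1 h1 le_rfl (Or.inl rfl)]
    · subst h; rw [hh' i 1 h1 h3 (Or.inl rfl)]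
    · subst h; rw [hh' i j h1 h3 (Or.inr rfl), hv' 1 j h2 le_rfl (Or.inl rfl)]
  intro q hq
  exact (all q hq).2 ((all p hp).1 hpS)

end FF

namespace FF
open Classical

/-- Interior of the box. -/
def Inn (N : ℕ) : Set (ℕ × ℕ) := {p | 2 ≤ p.1 ∧ 2 ≤ p.2 ∧ p.1 + 1 ≤ N ∧ p.2 + 1 ≤ N}

/-- The box. -/
def Box (N : ℕ) : Set (ℕ × ℕ) := {p | 1 ≤ p.1 ∧ 1 ≤ p.2 ∧ p.1 ≤ N ∧ p.2 ≤ N}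

lemma box_finite (N : ℕ) : (Box N).Finite := by
  refine ((Set.finite_Iic N).prod (Set.finite_Iic N)).subset ?_
  rintro ⟨i, j⟩ h
  exact ⟨h.2.2.1, h.2.2.2⟩

lemma inn_sub (N : ℕ) : Inn N ⊆ Box N := by
  rintro ⟨i, j⟩ ⟨h1, h2, h3, h4⟩
  dsimp only at *
  exact ⟨by dsimp only; omega, by dsimp only; omega, by dsimp only; omega, by dsimp only; omega⟩

lemma ring_sub (N : ℕ) : Ring N ⊆ Box N := fun _ h => h.1

lemma not_ring_of_inn {N : ℕ} {p : ℕ × ℕ} (h : p ∈ Inn N) : p ∉ Ring N := by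
  rintro ⟨_, h'⟩
  obtain ⟨h1, h2, h3, h4⟩ := h
  omega

lemma inn_of_not_ring {N : ℕ} {p : ℕ × ℕ} (h : p ∈ Box N) (h' : p ∉ Ring N) : p ∈ Inn N := by
  obtain ⟨h1, h2, h3, h4⟩ := h
  have : ¬ (p.1 = 1 ∨ p.1 = N ∨ p.2 = 1 ∨ p.2 = N) := fun h5 => h' ⟨⟨h1, h2, h3, h4⟩, h5⟩
  push Not at this
  refine ⟨?_, ?_, ?_, ?_⟩ <;> omega

/-- Cells of label `v`. -/
def Cell {V : Type} (N : ℕ) (lbl : ℕ × ℕ → V) (v : V) : Set (ℕ × ℕ) := {p | p ∈ Inn N ∧ lbl p = v}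

/-- Labels adjacent in the lattice. -/
def LAdj {V : Type} (N : ℕ) (lbl : ℕ × ℕ → V) (u w : V) : Prop :=
  ∃ (e : Ed) (p q : ℕ × ℕ), p ∈ Cell N lbl u ∧ q ∈ Cell N lbl w ∧
    ((e.a = p ∧ e.b = q) ∨ (e.a = q ∧ e.b = p))

/-- Ancestors. -/
def Anc {V : Type} (par : V → V) (v : V) : Set V := {w | ∃ k : ℕ, par^[k] v = w}

lemma anc_self {V : Type} (par : V → V) (v : V) : v ∈ Anc par v := ⟨0, rfl⟩

lemma anc_par {V : Type} (par : V → V) (v : V) : Anc par (par v) ⊆ Anc par v := by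
  rintro w ⟨k, hk⟩
  exact ⟨k + 1, by rw [Function.iterate_succ_apply]; exact hk⟩

lemma add_ne_zero {c c' : Ch} {e : Ed} (h : (c + c') e ≠ 0) : c e ≠ 0 ∨ c' e ≠ 0 := by
  by_contra hh
  push Not at hh
  exact h (by simp [hh.1, hh.2])

lemma sg_ne_zero {e f : Ed} (h : sg e f ≠ 0) : f = e := by
  by_contra hh
  exact h (by simp [sg, hh])

lemma treeData {V : Type} (N : ℕ) (hN : 3 ≤ N) (lbl : ℕ × ℕ → V)
    (hconn : ∀ v, Conn Set.univ (Cell N lbl v)) (hne : ∀ v, (Cell N lbl v).Nonempty)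
    (r : V) (par : V → V) (dep : V → ℕ)
    (hpar : ∀ v, v ≠ r → dep (par v) + 1 = dep v ∧ LAdj N lbl v (par v)) :
    ∃ (P : ℕ × ℕ → Ch) (τ : Set Ed) (A : ℕ × ℕ → V) (ρ : ℕ × ℕ),
      (∀ p ∈ Inn N, A p = lbl p) ∧
      (∀ p ∈ Box N, ∀ i j, bd (P p) i j = ind p i j + ind ρ i j) ∧
      (∀ p ∈ Box N, ∀ e, P p e ≠ 0 → e ∈ τ ∧ e.a ∈ Box N ∧ e.b ∈ Box N ∧
        A e.a ∈ Anc par (A p) ∧ A e.b ∈ Anc par (A p)) ∧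
      (∀ e ∈ τ, P e.a + P e.b = sg e) ∧
      (∀ e, Bdy N e → ∀ e', (P e.a + P e.b) e' ≠ 0 → Bdy N e') := by
  have hq : ∀ v, ∃ (e : Ed) (q y : ℕ × ℕ), q ∈ Cell N lbl v ∧ (v ≠ r → y ∈ Cell N lbl (par v) ∧
      ((e.a = q ∧ e.b = y) ∨ (e.a = y ∧ e.b = q))) := by
    intro v
    by_cases hv : v = r
    · obtain ⟨q, hq⟩ := hne v
      exact ⟨.h 0 0, q, q, hq, fun h => absurd hv h⟩
    · obtain ⟨e, p, q, hp, hq, h⟩ := (hpar v hv).2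
      exact ⟨e, p, q, hp, fun _ => ⟨hq, h⟩⟩
  choose e0 q y hqc hy using hq
  have hcf : ∀ v, (Cell N lbl v).Finite := fun v =>
    (box_finite N).subset (fun p hp => inn_sub N hp.1)
  have hst := fun v => spanTree Set.univ (Cell N lbl v) (hcf v) (hconn v) (q v) (hqc v)
  choose Pf τf hT using hst
  have hy22 : ((2:ℕ), (2:ℕ)) ∈ Inn N := ⟨le_rfl, le_rfl, by dsimp only; omega, by dsimp only; omega⟩
  have hq12 : ((1:ℕ), (2:ℕ)) ∈ Ring N :=
    ⟨⟨by simp, by simp, by dsimp only; omega, by dsimp only; omega⟩, Or.inl rfl⟩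
  obtain ⟨Pω, τω, hω⟩ := spanTree {e | Bdy N e} (Ring N)
    ((box_finite N).subset (ring_sub N)) (ring_conn N (by omega)) (1, 2) hq12
  obtain ⟨Z, hZr, hZ⟩ : ∃ Z : V → Ch, Z r = 0 ∧
      ∀ v, v ≠ r → Z v = sg (e0 v) + Pf (par v) (y v) + Z (par v) := by
    let Zf : ℕ → V → Ch := fun n => Nat.rec (fun _ => 0)
      (fun _ f v => if v = r then 0 else sg (e0 v) + Pf (par v) (y v) + f (par v)) n
    have hs : ∀ n v, Zf (n+1) v = if v = r then 0 else sg (e0 v) + Pf (par v) (y v) + Zf n (par v) :=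
      fun _ _ => rfl
    refine ⟨fun v => Zf (dep v + 1) v, by dsimp only; rw [hs, if_pos rfl], fun v hv => ?_⟩
    dsimp only
    rw [hs, if_neg hv, (hpar v hv).1]
  set A : ℕ × ℕ → V := fun p => if p ∈ Ring N then lbl (2, 2) else lbl p with hA
  set P : ℕ × ℕ → Ch := fun p => if p ∈ Ring N then Pω p + (sg (.h 1 2) + Pf (lbl (2,2)) (2,2) + Z (lbl (2,2)))
    else Pf (lbl p) p + Z (lbl p) with hP
  set τ : Set Ed := (⋃ v, τf v) ∪ {e | ∃ v, v ≠ r ∧ e = e0 v} ∪ τω ∪ {Ed.h 1 2} with hτ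
  have hAi : ∀ p ∈ Inn N, A p = lbl p := fun p hp => by
    simp only [hA, if_neg (not_ring_of_inn hp)]
  have hPi : ∀ v, ∀ p ∈ Cell N lbl v, P p = Pf v p + Z v := fun v p hp => by
    simp only [hP, if_neg (not_ring_of_inn hp.1), hp.2]
  have hPr : ∀ p ∈ Ring N, P p = Pω p + (sg (.h 1 2) + P (2,2)) := fun p hp => by
    rw [hPi _ (2,2) ⟨hy22, rfl⟩]
    simp only [hP, if_pos hp, add_assoc]
  have hAc : ∀ v, ∀ p ∈ Cell N lbl v, A p = v := fun v p hp => by rw [hAi p hp.1, hp.2]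
  have hAr : ∀ p ∈ Ring N, A p = lbl (2,2) := fun p hp => by simp only [hA, if_pos hp]
  have hA22 : A (2,2) = lbl (2,2) := hAi _ hy22
  have hZP : ∀ n v, dep v = n → (∀ i j, bd (Z v) i j = ind (q v) i j + ind (q r) i j) ∧
      ∀ e, Z v e ≠ 0 → e ∈ τ ∧ e.a ∈ Box N ∧ e.b ∈ Box N ∧ A e.a ∈ Anc par v ∧ A e.b ∈ Anc par v := by
    intro n
    induction n using Nat.strong_induction_on with
    | _ n ih =>
      intro v hv
      by_cases hvr : v = r
      · subst hvr
        rw [hZr]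
        refine ⟨fun i j => ?_, fun e he => absurd rfl he⟩
        rw [z2]; simp [bd]
      · obtain ⟨hd, -⟩ := hpar v hvr
        obtain ⟨hyc, hee⟩ := hy v hvr
        obtain ⟨ih1, ih2⟩ := ih (dep (par v)) (by omega) (par v) rfl
        obtain ⟨-, -, hT3, hT4⟩ := hT (par v)
        obtain ⟨hy1, hy2⟩ := hT4 _ hyc
        rw [hZ v hvr]
        constructor
        · intro i j
          rw [bd_add, bd_add, bd_sg, hy1, ih1]
          have h1 := z2 (ind (y v) i j)
          have h2 := z2 (ind (q (par v)) i j)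
          rcases hee with ⟨ha, hb⟩ | ⟨ha, hb⟩
          · rw [ha, hb]; linear_combination h1 + h2
          · rw [ha, hb]; linear_combination h1 + h2
        · intro e he
          rcases add_ne_zero he with he | he
          · rcases add_ne_zero he with he | he
            · have := sg_ne_zero he
              subst this
              refine ⟨Or.inl (Or.inl (Or.inr ⟨v, hvr, rfl⟩)), ?_⟩
              have k1 := inn_sub N (hqc v).1
              have k2 := inn_sub N hyc.1
              have k3 : A (q v) ∈ Anc par v := by rw [hAc v _ (hqc v)]; exact anc_self _ _
              have k4 : A (y v) ∈ Anc par v := by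
                rw [hAc _ _ hyc]; exact anc_par _ _ (anc_self _ _)
              rcases hee with ⟨ha, hb⟩ | ⟨ha, hb⟩
              · rw [ha, hb]; exact ⟨k1, k2, k3, k4⟩
              · rw [ha, hb]; exact ⟨k2, k1, k4, k3⟩
            · have het := hy2 e he
              obtain ⟨ha, hb, -⟩ := hT3 e het
              refine ⟨Or.inl (Or.inl (Or.inl (Set.mem_iUnion.2 ⟨_, het⟩))), inn_sub N ha.1,
                inn_sub N hb.1, ?_, ?_⟩
              · rw [hAc _ _ ha]; exact anc_par _ _ (anc_self _ _)
              · rw [hAc _ _ hb]; exact anc_par _ _ (anc_self _ _)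
          · obtain ⟨h1, h2, h3, h4, h5⟩ := ih2 e he
            exact ⟨h1, h2, h3, anc_par _ _ h4, anc_par _ _ h5⟩
  have hPc : ∀ v, ∀ p ∈ Cell N lbl v, (∀ i j, bd (P p) i j = ind p i j + ind (q r) i j) ∧
      ∀ e, P p e ≠ 0 → e ∈ τ ∧ e.a ∈ Box N ∧ e.b ∈ Box N ∧ A e.a ∈ Anc par v ∧ A e.b ∈ Anc par v := by
    intro v p hp
    obtain ⟨-, -, hT3, hT4⟩ := hT v
    obtain ⟨h1, h2⟩ := hT4 _ hp
    obtain ⟨z1, z3⟩ := hZP _ v rfl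
    rw [hPi v p hp]
    constructor
    · intro i j
      rw [bd_add, h1, z1]
      linear_combination z2 (ind (q v) i j)
    · intro e he
      rcases add_ne_zero he with he | he
      · have het := h2 e he
        obtain ⟨ha, hb, -⟩ := hT3 e het
        refine ⟨Or.inl (Or.inl (Or.inl (Set.mem_iUnion.2 ⟨_, het⟩))), inn_sub N ha.1,
          inn_sub N hb.1, ?_, ?_⟩
        · rw [hAc _ _ ha]; exact anc_self _ _
        · rw [hAc _ _ hb]; exact anc_self _ _
      · exact z3 e he
  obtain ⟨hω1, hω2, hω3, hω4⟩ := hω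
  have h22 := hPc _ (2,2) ⟨hy22, rfl⟩
  have hPring : ∀ p ∈ Ring N, (∀ i j, bd (P p) i j = ind p i j + ind (q r) i j) ∧
      ∀ e, P p e ≠ 0 → e ∈ τ ∧ e.a ∈ Box N ∧ e.b ∈ Box N ∧ A e.a ∈ Anc par (lbl (2,2)) ∧
        A e.b ∈ Anc par (lbl (2,2)) := by
    intro p hp
    obtain ⟨h1, h2⟩ := hω4 p hp
    rw [hPr p hp]
    constructor
    · intro i j
      rw [bd_add, bd_add, bd_sg, h1, h22.1]
      simp only [Ed.a, Ed.b]
      linear_combination z2 (ind (1,2) i j) + z2 (ind (2,2) i j)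
    · intro e he
      rcases add_ne_zero he with he | he
      · have het := h2 e he
        obtain ⟨ha, hb, -⟩ := hω3 e het
        refine ⟨Or.inl (Or.inr het), ring_sub N ha, ring_sub N hb, ?_, ?_⟩
        · rw [hAr _ ha]; exact anc_self _ _
        · rw [hAr _ hb]; exact anc_self _ _
      · rcases add_ne_zero he with he | he
        · have := sg_ne_zero he
          subst this
          refine ⟨Or.inr rfl, ring_sub N hq12, inn_sub N hy22, ?_, ?_⟩
          · simp only [Ed.a]; rw [hAr _ hq12]; exact anc_self _ _
          · simp only [Ed.b]; rw [hA22]; exact anc_self _ _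
        · exact h22.2 e he
  refine ⟨P, τ, A, q r, hAi, ?_, ?_, ?_, ?_⟩
  · intro p hp
    by_cases hr : p ∈ Ring N
    · exact (hPring p hr).1
    · exact (hPc (lbl p) p ⟨inn_of_not_ring hp hr, rfl⟩).1
  · intro p hp
    by_cases hr : p ∈ Ring N
    · rw [hAr p hr]; exact (hPring p hr).2
    · have hi := inn_of_not_ring hp hr
      rw [hAi p hi]
      exact (hPc (lbl p) p ⟨hi, rfl⟩).2
  · rintro e (((he | ⟨v, hv, rfl⟩) | he) | he)
    · obtain ⟨v, hv⟩ := Set.mem_iUnion.1 he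
      obtain ⟨ha, hb, hs⟩ := (hT v).2.2.1 e hv
      rw [hPi v _ ha, hPi v _ hb, ← hs]
      calc Pf v e.a + Z v + (Pf v e.b + Z v) = Pf v e.a + Pf v e.b + (Z v + Z v) := by abel
        _ = _ := by rw [ch2, add_zero]
    · obtain ⟨hyc, hee⟩ := hy v hv
      have key : P (q v) + P (y v) = sg (e0 v) := by
        rw [hPi v _ (hqc v), hPi _ _ hyc, (hT v).1, hZ v hv]
        calc _ = sg (e0 v) + (Pf (par v) (y v) + Pf (par v) (y v)) + (Z (par v) + Z (par v)) := by abel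
          _ = _ := by rw [ch2, ch2, add_zero, add_zero]
      rcases hee with ⟨ha, hb⟩ | ⟨ha, hb⟩
      · rw [ha, hb, key]
      · rw [ha, hb, add_comm, key]
    · obtain ⟨ha, hb, hs⟩ := hω3 e he
      rw [hPr _ ha, hPr _ hb, ← hs]
      calc _ = Pω e.a + Pω e.b + ((sg (.h 1 2) + P (2,2)) + (sg (.h 1 2) + P (2,2))) := by abel
        _ = _ := by rw [ch2, add_zero]
    · have : e = Ed.h 1 2 := he
      subst this
      simp only [Ed.a, Ed.b]
      rw [hPr _ hq12, hω1, zero_add, add_assoc, ch2, add_zero]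
  · intro e he e' he'
    have hab : e.a ∈ Ring N ∧ e.b ∈ Ring N := by
      cases e with
      | h i j => 
        simp only [Bdy] at he
        simp only [Ring, Ed.a, Ed.b, Set.mem_ofPred_eq]; omega
      | v i j => 
        simp only [Bdy] at he
        simp only [Ring, Ed.a, Ed.b, Set.mem_ofPred_eq]; omega
      | d i j => exact absurd he id
    rw [hPr _ hab.1, hPr _ hab.2, show Pω e.a + (sg (Ed.h 1 2) + P (2, 2)) + (Pω e.b + (sg (Ed.h 1 2) + P (2, 2)))
      = Pω e.a + Pω e.b + ((sg (.h 1 2) + P (2,2)) + (sg (.h 1 2) + P (2,2))) by abel, ch2, add_zero] at he'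
    rcases add_ne_zero he' with h | h
    · exact hω2 ((hω4 _ hab.1).2 _ h)
    · exact hω2 ((hω4 _ hab.2).2 _ h)

end FF

namespace FF
open Classical

lemma z2_cases (x : ZMod 2) : x = 0 ∨ x = 1 := by revert x; decide

lemma z2_flip {s a b : ZMod 2} (h : a + b = 1) : s ≠ a ↔ s = b := by
  revert s a b; decide

lemma sink (N : ℕ) (hN : 3 ≤ N) (C : Ed → Ch) (out : Fc → Ed → Prop) (τ : Set Ed)
    (hC : ∀ t, Ins N t → ∀ k, Closed (C (t.edge k)))
    (h1 : ∀ t, Ins N t → ∀ k, out t (t.edge k) →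
      t.edge k ∉ τ ∧ ∃ t', Ins N t' ∧ Cross t (t.edge k) t' ∧ ¬ out t' (t.edge k))
    (h2 : ∀ t, Ins N t → ∀ k, t.edge k ∉ τ → C (t.edge k) (t.edge k) = 1 ∧
      ∀ f, f ∉ τ → f ≠ t.edge k → C (t.edge k) f = 0) :
    ∃ t, Ins N t ∧ ∀ k, ¬ out t (t.edge k) := by
  by_contra hcon
  push Not at hcon
  let X := {t // Ins N t}
  have hX : Finite X := (ins_finite N).to_subtype
  have hch : ∀ x : X, ∃ (k : Fin 3) (y : X), out x.1 (x.1.edge k) ∧ x.1.edge k ∉ τ ∧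
      Cross x.1 (x.1.edge k) y.1 ∧ ¬ out y.1 (x.1.edge k) := by
    intro x
    obtain ⟨k, hk⟩ := hcon x.1 x.2
    obtain ⟨ht, t', i1, i2, i3⟩ := h1 x.1 x.2 k hk
    exact ⟨k, ⟨t', i1⟩, hk, ht, i2, i3⟩
  choose κ g hout hτ hcr hno using hch
  let x0 : X := ⟨.U 1 1, le_rfl, le_rfl, by omega, by omega⟩
  obtain ⟨a, b, hab, he⟩ := Finite.exists_ne_map_eq_of_infinite (fun n : ℕ => g^[n] x0)
  have hper : ∃ y, ∃ n, 0 < n ∧ g^[n] y = y := by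
    rcases lt_or_gt_of_ne hab with h | h
    · refine ⟨g^[a] x0, b - a, by omega, ?_⟩
      rw [← Function.iterate_add_apply, show b - a + a = b by omega]; exact he.symm
    · refine ⟨g^[b] x0, a - b, by omega, ?_⟩
      rw [← Function.iterate_add_apply, show a - b + b = a by omega]; exact he
  obtain ⟨y, hy⟩ := hper
  set k := Nat.find hy with hk
  have hk0 : 0 < k := (Nat.find_spec hy).1
  have hky : g^[k] y = y := (Nat.find_spec hy).2
  have hmin : ∀ m, 0 < m → m < k → g^[m] y ≠ y := fun m hm hmk h => Nat.find_min hy hmk ⟨hm, h⟩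
  set e0 := y.1.edge (κ y) with he0
  have hcl : Closed (C e0) := hC _ y.2 _
  obtain ⟨hc1, hc0⟩ := h2 _ y.2 _ (hτ y)
  have hconst : ∀ m, 1 ≤ m → m ≤ k → sd (C e0) (g^[m] y).1 = sd (C e0) (g y).1 := by
    intro m hm
    induction m, hm using Nat.le_induction with
    | base => intro _; rfl
    | succ m hm ih =>
      intro hmk
      rw [← ih (by omega)]
      have hx := hcr (g^[m] y)
      rw [Function.iterate_succ_apply']
      refine (eq_of_add ?_).symm
      rw [sd_cross hcl hx]
      refine hc0 _ (hτ _) ?_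
      intro heq
      have hcy := hcr y
      rw [heq] at hx
      rcases hcy.of_same hx with h | h
      · exact hmin m (by omega) (by omega) (Subtype.ext h.1)
      · have h3 := hout (g^[m] y)
        rw [heq] at h3
        have h4 := hno y
        rw [← h.1] at h4
        exact h4 h3
  have hf := sd_cross hcl (hcr y)
  have := hconst k hk0 le_rfl
  rw [hky] at this
  rw [this, z2, hc1] at hf
  exact absurd hf (by decide)

lemma ins_edge {N : ℕ} {t : Fc} (ht : Ins N t) (k : Fin 3) :
    (t.edge k).a ∈ Box N ∧ (t.edge k).b ∈ Box N := by
  cases t with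
  | U i j =>
    simp only [Ins] at ht
    fin_cases k <;> simp [Fc.edge, Ed.a, Ed.b, Box] <;> omega
  | D i j =>
    simp only [Ins] at ht
    fin_cases k <;> simp [Fc.edge, Ed.a, Ed.b, Box] <;> omega

lemma tri_sum (P : ℕ × ℕ → Ch) (t : Fc) :
    (P (t.edge 0).a + P (t.edge 0).b + sg (t.edge 0)) + (P (t.edge 1).a + P (t.edge 1).b + sg (t.edge 1))
      + (P (t.edge 2).a + P (t.edge 2).b + sg (t.edge 2))
      = sg (t.edge 0) + sg (t.edge 1) + sg (t.edge 2) := by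
  cases t with
  | U i j =>
    simp only [Fc.edge, Ed.a, Ed.b, Matrix.cons_val]
    calc _ = (P (i,j) + P (i,j)) + (P (i+1,j) + P (i+1,j)) + (P (i,j+1) + P (i,j+1)) +
        (sg (.h i j) + sg (.v i j) + sg (.d i j)) := by abel
      _ = _ := by simp only [ch2, zero_add]
  | D i j =>
    simp only [Fc.edge, Ed.a, Ed.b, Matrix.cons_val]
    calc _ = (P (i+1,j) + P (i+1,j)) + (P (i,j+1) + P (i,j+1)) + (P (i+1,j+1) + P (i+1,j+1)) +
        (sg (.d i j) + sg (.h i (j+1)) + sg (.v (i+1) j)) := by abel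
      _ = _ := by simp only [ch2, zero_add]

theorem sep {V : Type} [Finite V] (N : ℕ) (hN : 3 ≤ N) (lbl : ℕ × ℕ → V)
    (hconn : ∀ v, Conn Set.univ (Cell N lbl v)) (hne : ∀ v, (Cell N lbl v).Nonempty)
    (r : V) (par : V → V) (dep : V → ℕ)
    (hpar : ∀ v, v ≠ r → dep (par v) + 1 = dep v ∧ LAdj N lbl v (par v)) :
    ∃ (A U : Fin 3 → Set V), (∀ i, ∃ x y, A i = Anc par x ∪ Anc par y) ∧
      (∀ i, Disjoint (U i) (A i)) ∧
      (∀ i, ∃ W : Set V, Disjoint W (U i) ∧ Disjoint W (A i) ∧ (U i).ncard ≤ W.ncard) ∧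
      (∀ i u w, LAdj N lbl u w → u ∈ U i → w ∉ U i → w ∈ A i) ∧
      (∀ v, ∃ i, v ∈ U i ∨ v ∈ A i) := by
  obtain ⟨P, τ, A, ρ, hA, hbd, hsup, hτ, hbdy⟩ := treeData N hN lbl hconn hne r par dep hpar
  choose pk hpk using hne
  set C : Ed → Ch := fun e => P e.a + P e.b + sg e with hC
  set AA : Ed → Set V := fun e => Anc par (A e.a) ∪ Anc par (A e.b) with hAA
  set S : Ed → V → ZMod 2 := fun e v => sd (C e) (fU (pk v)) with hS
  have hCs : ∀ e, e.a ∈ Box N → e.b ∈ Box N → ∀ f, C e f ≠ 0 →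
      f.a ∈ Box N ∧ f.b ∈ Box N ∧ A f.a ∈ AA e ∧ A f.b ∈ AA e := by
    intro e ha hb f hf
    rcases add_ne_zero hf with hf | hf
    · rcases add_ne_zero hf with hf | hf
      · obtain ⟨_, h2, h3, h4, h5⟩ := hsup _ ha f hf
        exact ⟨h2, h3, Or.inl h4, Or.inl h5⟩
      · obtain ⟨_, h2, h3, h4, h5⟩ := hsup _ hb f hf
        exact ⟨h2, h3, Or.inr h4, Or.inr h5⟩
    · have := sg_ne_zero hf
      subst this
      exact ⟨ha, hb, Or.inl (anc_self _ _), Or.inr (anc_self _ _)⟩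
  have hcl : ∀ e, e.a ∈ Box N → e.b ∈ Box N → Closed (C e) := by
    intro e ha hb
    refine ⟨fun i j => ?_, fun j => ⟨?_, ?_, ?_⟩⟩
    · simp only [hC]
      rw [bd_add, bd_add, bd_sg, hbd _ ha, hbd _ hb]
      linear_combination z2 (ind e.a i j) + z2 (ind e.b i j) + z2 (ind ρ i j)
    · by_contra h
      have := (hCs e ha hb _ h).1.1
      simp [Ed.a] at this
    · by_contra h
      have := (hCs e ha hb _ h).1.1
      simp [Ed.a] at this
    · by_contra h
      have := (hCs e ha hb _ h).2.1.1
      simp [Ed.b] at this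
  have hoff : ∀ e, e.a ∈ Box N → e.b ∈ Box N → ∀ v, v ∉ AA e → ∀ p ∈ Cell N lbl v,
      Off (C e) p := by
    intro e ha hb v hv p hp f hf
    by_contra h
    obtain ⟨-, -, h3, h4⟩ := hCs e ha hb f h
    have hAp : A p = v := by rw [hA p hp.1, hp.2]
    rcases hf with hf | hf
    · rw [hf, hAp] at h3; exact hv h3
    · rw [hf, hAp] at h4; exact hv h4
  have hb1 : ∀ p ∈ Inn N, 1 ≤ p.1 ∧ 1 ≤ p.2 := fun p hp => ⟨(inn_sub N hp).1, (inn_sub N hp).2.1⟩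
  have hside : ∀ e, e.a ∈ Box N → e.b ∈ Box N → ∀ v, v ∉ AA e → ∀ p ∈ Cell N lbl v,
      sd (C e) (fU p) = S e v := by
    intro e ha hb v hv
    refine hconn v {p | sd (C e) (fU p) = S e v} ⟨pk v, hpk v, rfl⟩ ?_
    intro f _ hfa hfb
    have := side_adj (hcl e ha hb) (hb1 _ hfa.1).1 (hb1 _ hfa.1).2 (hb1 _ hfb.1).1 (hb1 _ hfb.1).2
      (hoff e ha hb v hv _ hfa) (hoff e ha hb v hv _ hfb)
    simp only [Set.mem_ofPred_eq, this]
  have hadj : ∀ e, e.a ∈ Box N → e.b ∈ Box N → ∀ u w, u ∉ AA e → w ∉ AA e → LAdj N lbl u w →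
      S e u = S e w := by
    rintro e ha hb u w hu hw ⟨f, p, q, hp, hq, hpq⟩
    rw [← hside e ha hb u hu p hp, ← hside e ha hb w hw q hq]
    have op := hoff e ha hb u hu p hp
    have oq := hoff e ha hb w hw q hq
    have bp := hb1 p hp.1
    have bq := hb1 q hq.1
    rcases hpq with ⟨h1, h2⟩ | ⟨h1, h2⟩
    · subst h1 h2; exact side_adj (hcl e ha hb) bp.1 bp.2 bq.1 bq.2 op oq
    · subst h1 h2; exact (side_adj (hcl e ha hb) bq.1 bq.2 bp.1 bp.2 oq op).symm
  set away : Fc → Ed → Set V := fun t e => {v | v ∉ AA e ∧ S e v ≠ sd (C e) t} with haway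
  set near : Fc → Ed → Set V := fun t e => {v | v ∉ AA e ∧ S e v = sd (C e) t} with hnear
  set out : Fc → Ed → Prop := fun t e => (near t e).ncard < (away t e).ncard with hout
  have hself : ∀ e, e.a ∈ Box N → e.b ∈ Box N → e ∉ τ → C e e = 1 ∧
      ∀ f, f ∉ τ → f ≠ e → C e f = 0 := by
    intro e ha hb he
    have hz : ∀ f, f ∉ τ → (P e.a + P e.b) f = 0 := by
      intro f hf
      by_contra h
      rcases add_ne_zero h with h | h
      · exact hf (hsup _ ha f h).1
      · exact hf (hsup _ hb f h).1
    refine ⟨?_, fun f hf hne => ?_⟩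
    · have : C e e = (P e.a + P e.b) e + sg e e := rfl
      rw [this, hz e he]; simp [sg]
    · have : C e f = (P e.a + P e.b) f + sg e f := rfl
      rw [this, hz f hf]; simp [sg, hne]
  have hemp : ∀ t e, (∀ v, v ∉ AA e → S e v = sd (C e) t) → ¬ out t e := by
    intro t e h
    have : away t e = ∅ := by
      ext v; simp only [haway, Set.mem_ofPred_eq, Set.mem_empty_iff_false, iff_false]
      rintro ⟨h1, h2⟩; exact h2 (h v h1)
    simp only [hout, this, Set.ncard_empty]; omega
  obtain ⟨t, ht, hsink⟩ := sink N hN C out τ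
    (fun t ht k => hcl _ (ins_edge ht k).1 (ins_edge ht k).2)
    (by
      intro t ht k hk
      obtain ⟨ha, hb⟩ := ins_edge ht k
      set e := t.edge k with he
      have het : e ∉ τ := by
        intro het
        have hz : C e = 0 := by simp only [hC]; rw [hτ e het, ch2]
        refine hemp t e (fun v _ => ?_) hk
        have : ∀ F, sd (0 : Ch) F = 0 := by intro F; cases F <;> simp [sd]
        simp only [hS, hz, this]
      have heb : ¬ Bdy N e := by
        intro heb
        refine hemp t e (fun v _ => ?_) hk
        have hsb : ∀ f, C e f ≠ 0 → Bdy N f := by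
          intro f hf
          rcases add_ne_zero hf with hf | hf
          · exact hbdy e heb f hf
          · rw [sg_ne_zero hf]; exact heb
        have hk1 := sd_const (hcl e ha hb) hsb t ht
        have hi := (hpk v).1
        have hk2 := sd_const (hcl e ha hb) hsb (fU (pk v))
          ⟨(hb1 _ hi).1, (hb1 _ hi).2, by have := hi.2.2.1; omega, by have := hi.2.2.2; omega⟩
        simp only [hS, hk1, hk2]
      obtain ⟨t', ht', hcr⟩ := cross_inside ht k heb
      refine ⟨het, t', ht', hcr, ?_⟩
      have hs := sd_cross (hcl e ha hb) hcr
      rw [(hself e ha hb het).1] at hs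
      have e1 : away t e = near t' e := by
        ext v; simp only [haway, hnear, Set.mem_ofPred_eq, z2_flip hs]
      have hs2 : sd (C e) t' + sd (C e) t = 1 := by rw [add_comm]; exact hs
      have e2 : away t' e = near t e := by
        ext v; simp only [haway, hnear, Set.mem_ofPred_eq, z2_flip hs2]
      simp only [hout, e1, e2] at hk ⊢
      omega)
    (fun t ht k hk => hself _ (ins_edge ht k).1 (ins_edge ht k).2 hk)
  refine ⟨fun i => AA (t.edge i), fun i => away t (t.edge i), fun i => ⟨_, _, rfl⟩, fun i => ?_,
    fun i => ⟨near t (t.edge i), ?_, ?_, ?_⟩, ?_, ?_⟩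
  · rw [Set.disjoint_left]; exact fun v hv => hv.1
  · rw [Set.disjoint_left]; exact fun v hv hv' => hv'.2 hv.2
  · rw [Set.disjoint_left]; exact fun v hv => hv.1
  · have := hsink i
    simp only [hout, not_lt] at this; exact this
  · intro i u w huw hu hw
    by_contra hwA
    refine hw ⟨hwA, ?_⟩
    rw [← hadj _ (ins_edge ht i).1 (ins_edge ht i).2 u w hu.1 hwA huw]
    exact hu.2
  · intro v
    by_contra hcon
    push Not at hcon
    have hs : ∀ i, S (t.edge i) v = sd (C (t.edge i)) t := by
      intro i
      by_contra h
      exact (hcon i).1 ⟨(hcon i).2, h⟩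
    have htot := tri_sum P t
    have g1 := sd_bdry t (fU (pk v))
    have g2 := sd_bdry t t
    rw [← htot, sd_add, sd_add] at g1 g2
    have hs0 := hs 0
    have hs1 := hs 1
    have hs2 := hs 2
    simp only [hS, hC] at hs0 hs1 hs2
    rw [hs0, hs1, hs2, g2, if_pos rfl] at g1
    by_cases hft : fU (pk v) = t
    · apply (hcon 0).2
      left
      have : (t.edge 0).a = pk v := by
        rw [← hft]; simp [fU, Fc.edge, Ed.a]
      rw [this, hA _ (hpk v).1, (hpk v).2]
      exact anc_self _ _
    · rw [if_neg hft] at g1; exact absurd g1 (by decide)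

end FF

namespace FF
open Classical

lemma inn_conn (N : ℕ) : Conn Set.univ (Inn N) := by
  intro S ⟨p0, hp0, hp0S⟩ hS
  have hrow : ∀ i j, 2 ≤ i → (i, j) ∈ Inn N → ((2, j) ∈ S ↔ (i, j) ∈ S) := by
    intro i j hi
    induction i, hi using Nat.le_induction with
    | base => intro _; rfl
    | succ i hi ih =>
      rintro ⟨h1, h2, h3, h4⟩
      dsimp only at h1 h2 h3 h4
      have h5 : (i, j) ∈ Inn N := ⟨hi, h2, by dsimp only; omega, h4⟩
      exact (ih h5).trans (hS (.h i j) trivial h5 ⟨h1, h2, h3, h4⟩)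
  have hcol : ∀ j, 2 ≤ j → (2, j) ∈ Inn N → ((2, 2) ∈ S ↔ (2, j) ∈ S) := by
    intro j hj
    induction j, hj using Nat.le_induction with
    | base => intro _; rfl
    | succ j hj ih =>
      rintro ⟨h1, h2, h3, h4⟩
      dsimp only at h1 h2 h3 h4
      have h5 : (2, j) ∈ Inn N := ⟨h1, hj, h3, by dsimp only; omega⟩
      exact (ih h5).trans (hS (.v 2 j) trivial h5 ⟨h1, h2, h3, h4⟩)
  have hall : ∀ p ∈ Inn N, ((2,2) ∈ S ↔ p ∈ S) := by
    rintro ⟨i, j⟩ hp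
    obtain ⟨h1, h2, h3, h4⟩ := id hp
    dsimp only at h1 h2 h3 h4
    exact (hcol j h2 ⟨le_rfl, h2, by dsimp only; omega, h4⟩).trans (hrow i j h1 hp)
  intro p hp
  exact (hall p hp).1 ((hall p0 hp0).2 hp0S)

/-- lattice neighbours -/
def Nb (p q : ℕ × ℕ) : Prop := ∃ e : Ed, (e.a = p ∧ e.b = q) ∨ (e.a = q ∧ e.b = p)

lemma Nb.symm {p q : ℕ × ℕ} (h : Nb p q) : Nb q p := by
  obtain ⟨e, h⟩ := h; exact ⟨e, h.symm⟩

lemma conn_insert {B : Set (ℕ × ℕ)} (hB : Conn Set.univ B) {p q : ℕ × ℕ} (hp : p ∈ B)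
    (h : Nb p q) : Conn Set.univ (insert q B) := by
  intro S hS hcl
  have hpq : p ∈ S ↔ q ∈ S := by
    obtain ⟨e, ⟨h1, h2⟩ | ⟨h1, h2⟩⟩ := h
    · have := hcl e trivial (by rw [h1]; exact Or.inr hp) (by rw [h2]; exact Or.inl rfl)
      rwa [h1, h2] at this
    · have := hcl e trivial (by rw [h1]; exact Or.inl rfl) (by rw [h2]; exact Or.inr hp)
      rw [h1, h2] at this; exact this.symm
  have hsub : B ⊆ S := by
    apply hB S
    · obtain ⟨x, hx, hxS⟩ := hS
      rcases hx with rfl | hx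
      · exact ⟨p, hp, hpq.2 hxS⟩
      · exact ⟨x, hx, hxS⟩
    · intro e _ ha hb
      exact hcl e trivial (Or.inr ha) (Or.inr hb)
  rintro x (rfl | hx)
  · exact hpq.1 (hsub hp)
  · exact hsub hx

/-- In a connected set meeting `S` but not inside `S` there is a crossing pair. -/
lemma conn_cross {B S : Set (ℕ × ℕ)} (hB : Conn Set.univ B) {x y : ℕ × ℕ} (hx : x ∈ B) (hxS : x ∈ S)
    (hy : y ∈ B) (hyS : y ∉ S) : ∃ p q, p ∈ B ∧ q ∈ B ∧ p ∈ S ∧ q ∉ S ∧ Nb p q := by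
  by_contra hcon
  push Not at hcon
  refine hyS (hB S ⟨x, hx, hxS⟩ ?_ hy)
  intro e _ ha hb
  constructor
  · intro h; by_contra h'
    exact hcon _ _ ha hb h h' ⟨e, Or.inl ⟨rfl, rfl⟩⟩
  · intro h; by_contra h'
    exact hcon _ _ hb ha h h' ⟨e, Or.inr ⟨rfl, rfl⟩⟩

theorem grow {V : Type} [Nonempty V] (G : SimpleGraph V) (N : ℕ)
    (K : V → Set (ℕ × ℕ)) (Q : V → V → Set (ℕ × ℕ))
    (hK1 : ∀ v, K v ⊆ Inn N) (hK2 : ∀ v, (K v).Nonempty) (hK3 : ∀ v, Conn Set.univ (K v))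
    (hK4 : ∀ u v, u ≠ v → Disjoint (K u) (K v))
    (hQ1 : ∀ u v, G.Adj u v → Q u v ⊆ Inn N) (hQ3 : ∀ u v, G.Adj u v → Conn Set.univ (Q u v))
    (hQu : ∀ u v, G.Adj u v → (Q u v ∩ K u).Nonempty)
    (hQv : ∀ u v, G.Adj u v → (Q u v ∩ K v).Nonempty)
    (hQK : ∀ u v w, G.Adj u v → w ≠ u → w ≠ v → Disjoint (Q u v) (K w))
    (hQQ : ∀ u v x y, G.Adj u v → G.Adj x y → s(u,v) ≠ s(x,y) → Disjoint (Q u v) (Q x y)) :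
    ∃ lbl : ℕ × ℕ → V, (∀ v, Conn Set.univ (Cell N lbl v)) ∧ (∀ v, (Cell N lbl v).Nonempty) ∧
      ∀ u v, G.Adj u v → LAdj N lbl u v := by
  let Good : (V → Set (ℕ × ℕ)) → Prop := fun B =>
    (∀ v, K v ⊆ B v) ∧ (∀ v, B v ⊆ Inn N) ∧ (∀ v, Conn Set.univ (B v)) ∧
    (∀ u v, u ≠ v → Disjoint (B u) (B v)) ∧
    (∀ u v w p, G.Adj u v → p ∈ Q u v → p ∈ B w → w = u ∨ w = v)
  have hfin : (Inn N).Finite := (box_finite N).subset (inn_sub N)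
  have hUsub : ∀ B, Good B → (⋃ v, B v) ⊆ Inn N := fun B hB => Set.iUnion_subset hB.2.1
  have hKgood : Good K := by
    refine ⟨fun _ => subset_rfl, hK1, hK3, hK4, ?_⟩
    intro u v w p huv hp hw
    by_contra h
    push Not at h
    exact Set.disjoint_left.1 (hQK u v w huv h.1 h.2) hp hw
  obtain ⟨B, hB, hmax⟩ : ∃ B, Good B ∧ ∀ B', Good B' → (⋃ v, B' v).ncard ≤ (⋃ v, B v).ncard := by
    let T : Set ℕ := {m | ∃ B, Good B ∧ m = (⋃ v, B v).ncard}
    have hbdd : BddAbove T := by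
      refine ⟨(Inn N).ncard, ?_⟩
      rintro m ⟨B, hB, rfl⟩
      exact Set.ncard_le_ncard (hUsub B hB) hfin
    have hne : T.Nonempty := ⟨_, K, hKgood, rfl⟩
    obtain ⟨B, hB, hm⟩ := Nat.sSup_mem hne hbdd
    refine ⟨B, hB, fun B' hB' => ?_⟩
    rw [← hm]
    exact le_csSup hbdd ⟨B', hB', rfl⟩
  have hext : ∀ w p q, p ∈ B w → Nb p q → q ∈ Inn N → q ∉ (⋃ v, B v) →
      (∀ u v, G.Adj u v → q ∈ Q u v → w = u ∨ w = v) → False := by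
    intro w p q hp hpq hqI hqB hqQ
    obtain ⟨b1, b2, b3, b4, b5⟩ := hB
    have hqn : ∀ v, q ∉ B v := fun v hv => hqB (Set.mem_iUnion.2 ⟨v, hv⟩)
    set B' := Function.update B w (insert q (B w)) with hB'
    have hw : B' w = insert q (B w) := Function.update_self _ _ _
    have ho : ∀ v, v ≠ w → B' v = B v := fun v hv => Function.update_of_ne hv _ _
    have hg : Good B' := by
      refine ⟨fun v => ?_, fun v => ?_, fun v => ?_, ?_, ?_⟩
      · by_cases hv : v = w
        · subst hv; rw [hw]; exact (b1 _).trans (Set.subset_insert _ _)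
        · rw [ho v hv]; exact b1 v
      · by_cases hv : v = w
        · subst hv; rw [hw]; exact Set.insert_subset hqI (b2 _)
        · rw [ho v hv]; exact b2 v
      · by_cases hv : v = w
        · subst hv; rw [hw]; exact conn_insert (b3 _) hp hpq
        · rw [ho v hv]; exact b3 v
      · intro u v huv
        by_cases hu : u = w
        · subst hu
          rw [hw, ho v (Ne.symm huv), Set.disjoint_insert_left]
          exact ⟨hqn v, b4 _ _ huv⟩
        · rw [ho u hu]
          by_cases hv : v = w
          · subst hv
            rw [hw, Set.disjoint_insert_right]
            exact ⟨hqn u, b4 _ _ huv⟩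
          · rw [ho v hv]; exact b4 _ _ huv
      · intro u v x z huv hz hx
        by_cases hxw : x = w
        · subst hxw
          rw [hw] at hx
          rcases hx with rfl | hx
          · exact hqQ u v huv hz
          · exact b5 u v _ z huv hz hx
        · rw [ho x hxw] at hx
          exact b5 u v x z huv hz hx
    have hle := hmax B' hg
    have hU : (⋃ v, B' v) = insert q (⋃ v, B v) := by
      ext z
      simp only [Set.mem_iUnion, Set.mem_insert_iff]
      constructor
      · rintro ⟨v, hv⟩
        by_cases hvw : v = w
        · subst hvw; rw [hw] at hv
          rcases hv with hv | hv
          · exact Or.inl hv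
          · exact Or.inr ⟨_, hv⟩
        · rw [ho v hvw] at hv; exact Or.inr ⟨v, hv⟩
      · rintro (rfl | ⟨v, hv⟩)
        · exact ⟨w, by rw [hw]; exact Or.inl rfl⟩
        · refine ⟨v, ?_⟩
          by_cases hvw : v = w
          · subst hvw; rw [hw]; exact Or.inr hv
          · rw [ho v hvw]; exact hv
    rw [hU, Set.ncard_insert_of_notMem hqB (hfin.subset (Set.iUnion_subset b2))] at hle
    omega
  obtain ⟨b1, b2, b3, b4, b5⟩ := hB
  have hQall : ∀ u v, G.Adj u v → Q u v ⊆ ⋃ v, B v := by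
    intro u v huv z hz
    by_contra hzB
    obtain ⟨x, hxQ, hxK⟩ := hQu u v huv
    obtain ⟨p, q, hp, hq, hpS, hqS, hn⟩ := conn_cross (hQ3 u v huv) hxQ
      (Set.mem_iUnion.2 ⟨u, b1 u hxK⟩) hz hzB
    obtain ⟨w, hw⟩ := Set.mem_iUnion.1 hpS
    refine hext w p q hw hn (hQ1 u v huv hq) hqS ?_
    intro x y hxy hqxy
    have hw' := b5 u v w p huv hp hw
    by_cases hs : s(u,v) = s(x,y)
    · rw [Sym2.eq_iff] at hs
      rcases hs with ⟨rfl, rfl⟩ | ⟨rfl, rfl⟩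
      · exact hw'
      · exact hw'.symm
    · exact absurd hqxy (Set.disjoint_left.1 (hQQ u v x y huv hxy hs) hq)
  have hall : Inn N ⊆ ⋃ v, B v := by
    intro z hz
    by_contra hzB
    obtain ⟨v0⟩ := ‹Nonempty V›
    obtain ⟨x, hx⟩ := hK2 v0
    obtain ⟨p, q, hp, hq, hpS, hqS, hn⟩ := conn_cross (inn_conn N) (hK1 v0 hx)
      (Set.mem_iUnion.2 ⟨v0, b1 v0 hx⟩) hz hzB
    obtain ⟨w, hw⟩ := Set.mem_iUnion.1 hpS
    refine hext w p q hw hn hq hqS ?_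
    intro x y hxy hqxy
    exact absurd (hQall x y hxy hqxy) hqS
  have hl : ∀ p, ∃ v, p ∈ Inn N → p ∈ B v := by
    intro p
    by_cases hp : p ∈ Inn N
    · obtain ⟨v, hv⟩ := Set.mem_iUnion.1 (hall hp)
      exact ⟨v, fun _ => hv⟩
    · exact ⟨Classical.arbitrary V, fun h => absurd h hp⟩
  choose lbl hlbl using hl
  have hcell : ∀ v, Cell N lbl v = B v := by
    intro v
    ext p
    constructor
    · rintro ⟨h1, rfl⟩; exact hlbl p h1
    · intro h
      refine ⟨b2 v h, ?_⟩
      by_contra hne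
      exact Set.disjoint_left.1 (b4 _ _ hne) (hlbl p (b2 v h)) h
  refine ⟨lbl, fun v => by rw [hcell]; exact b3 v, fun v => by rw [hcell]; exact (hK2 v).mono (b1 v), ?_⟩
  intro u v huv
  obtain ⟨x, hxQ, hxK⟩ := hQu u v huv
  obtain ⟨y, hyQ, hyK⟩ := hQv u v huv
  obtain ⟨p, q, hp, hq, hpS, hqS, e, he⟩ := conn_cross (hQ3 u v huv) hxQ (b1 u hxK) hyQ
    (Set.disjoint_right.1 (b4 u v huv.ne) (b1 v hyK))
  obtain ⟨w, hw⟩ := Set.mem_iUnion.1 (hQall u v huv hq)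
  have hwv : w = v := by
    rcases b5 u v w q huv hq hw with rfl | h
    · exact absurd hw hqS
    · exact h
  subst hwv
  exact ⟨e, p, q, by rw [hcell]; exact hpS, by rw [hcell]; exact hw, he⟩

end FF

namespace FF
open Classical

/-- brick row -/
noncomputable def bj (h : ℝ) (p : ℝ × ℝ) : ℤ := ⌊h * p.2⌋

/-- brick column -/
noncomputable def bi (h : ℝ) (p : ℝ × ℝ) : ℤ := ⌊h * p.1 - (bj h p : ℝ) / 2⌋

/-- brick index, shifted to naturals -/
noncomputable def bm (h : ℝ) (M : ℕ) (p : ℝ × ℝ) : ℕ × ℕ :=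
  ((bi h p + M).toNat, (bj h p + M).toNat)

lemma floor_near (a : ℝ) : ∀ᶠ b : ℝ in nhds a, ⌊b⌋ = ⌊a⌋ ∨ ⌊b⌋ = ⌊a⌋ - 1 := by
  have h1 : ∀ᶠ b : ℝ in nhds a, b < (⌊a⌋ : ℝ) + 1 := Iio_mem_nhds (Int.lt_floor_add_one a)
  have h2 : ∀ᶠ b : ℝ in nhds a, (⌊a⌋ : ℝ) - 1 < b :=
    Ioi_mem_nhds (by have := Int.floor_le a; linarith)
  filter_upwards [h1, h2] with b h1 h2
  have h3 : ⌊b⌋ < ⌊a⌋ + 1 := by rw [Int.floor_lt]; push_cast; exact h1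
  have h4 : ⌊a⌋ - 1 ≤ ⌊b⌋ := by rw [Int.le_floor]; push_cast; exact h2.le
  omega

lemma brick_near (h : ℝ) (p : ℝ × ℝ) : ∀ᶠ q in nhds p,
    (bj h q = bj h p ∧ (bi h q = bi h p ∨ bi h q = bi h p - 1)) ∨
    (bj h q = bj h p - 1 ∧ (bi h q = bi h p ∨ bi h q = bi h p + 1)) := by
  have hc2 : Continuous (fun q : ℝ × ℝ => h * q.2) := by fun_prop
  have hc1 : Continuous (fun q : ℝ × ℝ => h * q.1 - (bj h p : ℝ) / 2) := by fun_prop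
  have e1 := hc2.continuousAt.eventually (floor_near (h * p.2))
  have e2 := hc1.continuousAt.eventually (floor_near (h * p.1 - (bj h p : ℝ) / 2))
  have e3 : ∀ᶠ q in nhds p, ((bi h p : ℝ) - 1/2 < h * q.1 - (bj h p : ℝ) / 2) :=
    hc1.continuousAt.eventually (Ioi_mem_nhds (by
      have := Int.floor_le (h * p.1 - (bj h p : ℝ) / 2); simp only [bi]; linarith))
  have e4 : ∀ᶠ q in nhds p, (h * q.1 - (bj h p : ℝ) / 2 < bi h p + 1) :=
    hc1.continuousAt.eventually (Iio_mem_nhds (Int.lt_floor_add_one _))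
  filter_upwards [e1, e2, e3, e4] with q e1 e2 e3 e4
  rcases e1 with e1 | e1
  · left
    have hj : bj h q = bj h p := e1
    refine ⟨hj, ?_⟩
    rw [← hj] at e2
    rw [show bi h p = ⌊h * p.1 - (bj h q : ℝ) / 2⌋ by rw [hj]; rfl]
    exact e2
  · right
    have hj : bj h q = bj h p - 1 := e1
    refine ⟨hj, ?_⟩
    have h5 : bi h p ≤ bi h q := by
      conv_rhs => rw [bi]
      rw [Int.le_floor, hj]; push_cast; linarith
    have h6 : bi h q < bi h p + 2 := by
      conv_lhs => rw [bi]
      rw [Int.floor_lt, hj]; push_cast; linarith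
    omega

/-- lies in the positive part -/
def Pos (h : ℝ) (M : ℕ) (p : ℝ × ℝ) : Prop := 0 ≤ bi h p + M ∧ 0 ≤ bj h p + M

lemma bm_near (h : ℝ) (M : ℕ) (p : ℝ × ℝ) (hp : Pos h M p) : ∀ᶠ q in nhds p, Pos h M q →
    bm h M q = bm h M p ∨ Nb (bm h M q) (bm h M p) := by
  filter_upwards [brick_near h p] with q hq hpq
  obtain ⟨p1, p2⟩ := hp
  obtain ⟨q1, q2⟩ := hpq
  simp only [bm]
  set a := bi h p
  set b := bj h p
  set c := bi h q
  set d := bj h q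
  rcases hq with ⟨h1, h2 | h2⟩ | ⟨h1, h2 | h2⟩
  · left; rw [h1, h2]
  · right; refine ⟨.h (c + M).toNat (d + M).toNat, Or.inl ⟨rfl, ?_⟩⟩
    simp only [Ed.b, Prod.mk.injEq, and_true, true_and]; omega
  · right; refine ⟨.v (c + M).toNat (d + M).toNat, Or.inl ⟨rfl, ?_⟩⟩
    simp only [Ed.b, Prod.mk.injEq, and_true, true_and]; omega
  · right; refine ⟨.d (a + M).toNat (d + M).toNat, Or.inl ⟨?_, ?_⟩⟩
    · simp only [Ed.a, Prod.mk.injEq, and_true, true_and]; omega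
    · simp only [Ed.b, Prod.mk.injEq, and_true, true_and]; omega

lemma image_conn (h : ℝ) (M : ℕ) (X : Set (ℝ × ℝ)) (hX : IsPreconnected X)
    (hpos : ∀ p ∈ X, Pos h M p) : Conn Set.univ (bm h M '' X) := by
  intro S ⟨_, ⟨p0, hp0, rfl⟩, hp0S⟩ hcl
  have : PreconnectedSpace X := Subtype.preconnectedSpace hX
  have hlc : IsLocallyConstant (fun x : X => bm h M x.1 ∈ S) := by
    rw [IsLocallyConstant.iff_eventually_eq]
    intro x
    have := continuous_subtype_val.continuousAt.eventually (bm_near h M x.1 (hpos x.1 x.2))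
    filter_upwards [this] with y hy
    have hxm : bm h M x.1 ∈ bm h M '' X := ⟨_, x.2, rfl⟩
    have hym : bm h M y.1 ∈ bm h M '' X := ⟨_, y.2, rfl⟩
    rcases hy (hpos y.1 y.2) with h1 | ⟨e, ⟨h1, h2⟩ | ⟨h1, h2⟩⟩
    · rw [h1]
    · have := hcl e trivial (by rw [h1]; exact hym) (by rw [h2]; exact hxm)
      rw [h1, h2] at this; exact propext this
    · have := hcl e trivial (by rw [h1]; exact hxm) (by rw [h2]; exact hym)
      rw [h1, h2] at this; exact (propext this).symm
  rintro _ ⟨p, hp, rfl⟩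
  have := hlc.apply_eq_of_preconnectedSpace ⟨p, hp⟩ ⟨p0, hp0⟩
  simp only at this
  rw [this]; exact hp0S

lemma bm_eq {h : ℝ} {M : ℕ} {p q : ℝ × ℝ} (hp : Pos h M p) (hq : Pos h M q)
    (he : bm h M p = bm h M q) : bi h p = bi h q ∧ bj h p = bj h q := by
  obtain ⟨p1, p2⟩ := hp
  obtain ⟨q1, q2⟩ := hq
  simp only [bm, Prod.mk.injEq] at he
  omega

lemma brick_dist {h : ℝ} (hh : 0 < h) {p q : ℝ × ℝ} (h1 : bi h p = bi h q) (h2 : bj h p = bj h q) :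
    dist p q ≤ 1 / h := by
  have key : ∀ a b : ℝ, ⌊a⌋ = ⌊b⌋ → |a - b| ≤ 1 := fun a b hab =>
    (Int.abs_sub_lt_one_of_floor_eq_floor hab).le
  have k2 := key _ _ h2
  have h1' : ⌊h * p.1 - (bj h p : ℝ) / 2⌋ = ⌊h * q.1 - (bj h p : ℝ) / 2⌋ := by
    have : bi h q = ⌊h * q.1 - (bj h p : ℝ) / 2⌋ := by rw [h2]; rfl
    rw [← this, ← h1]; rfl
  have k1 := key _ _ h1'
  rw [show h * p.1 - (bj h p : ℝ) / 2 - (h * q.1 - (bj h p : ℝ) / 2) = h * (p.1 - q.1) by ring,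
    abs_mul, abs_of_pos hh] at k1
  rw [← mul_sub, abs_mul, abs_of_pos hh] at k2
  rw [Prod.dist_eq, Real.dist_eq, Real.dist_eq, max_le_iff, le_div_iff₀ hh, le_div_iff₀ hh]
  constructor <;> linarith

lemma ev_disj (X Y : Set (ℝ × ℝ)) (hX : IsCompact X) (hY : IsCompact Y) (hXY : Disjoint X Y) :
    ∀ᶠ h in Filter.atTop, ∀ M : ℕ, (∀ p ∈ X, Pos h M p) → (∀ p ∈ Y, Pos h M p) →
      Disjoint (bm h M '' X) (bm h M '' Y) := by
  obtain ⟨δ, hδ, hd⟩ := Metric.exists_pos_forall_lt_edist hX hY.isClosed hXY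
  have hδ' : (0:ℝ) < δ := hδ
  filter_upwards [Filter.eventually_ge_atTop (1 / (δ:ℝ)), Filter.eventually_gt_atTop 0] with h h1 h0
  intro M hpX hpY
  rw [Set.disjoint_left]
  rintro _ ⟨p, hp, rfl⟩ ⟨q, hq, he⟩
  obtain ⟨e1, e2⟩ := bm_eq (hpY q hq) (hpX p hp) he
  have k1 := brick_dist h0 e1.symm e2.symm
  have k2 := hd p hp q hq
  have k3 : (1:ℝ) / h ≤ δ := by
    rw [div_le_iff₀ h0]; rw [div_le_iff₀ hδ'] at h1; linarith
  rw [edist_nndist] at k2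
  have k4 : (δ:ℝ) < dist p q := by
    rw [← coe_nndist]; exact_mod_cast k2
  linarith

lemma brick_bound (h : ℝ) (X : Set (ℝ × ℝ)) (hX : IsCompact X) :
    ∃ M N : ℕ, 3 ≤ N ∧ ∀ p ∈ X, Pos h M p ∧ bm h M p ∈ Inn N := by
  have e : ∃ B : ℕ, ∀ p ∈ X, |bi h p| ≤ B ∧ |bj h p| ≤ B := by
    obtain ⟨C1, hC1⟩ := (hX.image (f := fun p : ℝ × ℝ => h * p.1) (by fun_prop)).isBounded.exists_norm_le
    obtain ⟨C2, hC2⟩ := (hX.image (f := fun p : ℝ × ℝ => h * p.2) (by fun_prop)).isBounded.exists_norm_le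
    obtain ⟨B, hB⟩ := exists_nat_ge (|C1| + |C2| + 4)
    refine ⟨B, fun p hp => ?_⟩
    have k1 := hC1 _ ⟨p, hp, rfl⟩
    have k2 := hC2 _ ⟨p, hp, rfl⟩
    rw [Real.norm_eq_abs, abs_le] at k1 k2
    have a1 := le_abs_self C1
    have a2 := le_abs_self C2
    have f1 : (bj h p : ℝ) ≤ h * p.2 := Int.floor_le _
    have f2 : h * p.2 < (bj h p : ℝ) + 1 := Int.lt_floor_add_one _
    have f3 : (bi h p : ℝ) ≤ h * p.1 - (bj h p : ℝ) / 2 := Int.floor_le _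
    have f4 : h * p.1 - (bj h p : ℝ) / 2 < (bi h p : ℝ) + 1 := Int.lt_floor_add_one _
    have g1 := abs_nonneg C1
    have g2 := abs_nonneg C2
    have r1 : |(bi h p : ℝ)| ≤ B := by rw [abs_le]; constructor <;> linarith
    have r2 : |(bj h p : ℝ)| ≤ B := by rw [abs_le]; constructor <;> linarith
    constructor
    · exact_mod_cast r1
    · exact_mod_cast r2
  obtain ⟨B, hB⟩ := e
  refine ⟨B + 2, 2 * B + 5, by omega, fun p hp => ?_⟩
  obtain ⟨h1, h2⟩ := hB p hp
  rw [abs_le] at h1 h2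
  refine ⟨⟨by push_cast; omega, by push_cast; omega⟩, ?_⟩
  simp only [bm, Inn, Set.mem_ofPred_eq]
  push_cast
  omega

end FF

namespace FF
open Classical

theorem latticeModel {V : Type} [Finite V] [Nonempty V] (G : SimpleGraph V) (hG : IsPlanar G)
    (hnb : ∀ v, ∃ u, G.Adj v u) :
    ∃ (N : ℕ) (lbl : ℕ × ℕ → V), 3 ≤ N ∧ (∀ v, Conn Set.univ (Cell N lbl v)) ∧
      (∀ v, (Cell N lbl v).Nonempty) ∧ ∀ u v, G.Adj u v → LAdj N lbl u v := by
  obtain ⟨E⟩ := hG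
  set K : V → Set (ℝ × ℝ) := fun v => ⋃ u : {u // G.Adj v u}, E.arc v u.1 '' Set.Icc 0 (1/3) with hK
  set Q : V → V → Set (ℝ × ℝ) := fun u v => E.arc u v '' Set.Icc (1/3) (2/3) with hQ
  have hKc : ∀ v, IsCompact (K v) := fun v => isCompact_iUnion fun u =>
    isCompact_Icc.image (E.arc_cont u.2)
  have hQc : ∀ u v, G.Adj u v → IsCompact (Q u v) := fun u v huv =>
    isCompact_Icc.image (E.arc_cont huv)
  have hKp : ∀ v, IsPreconnected (K v) := fun v => isPreconnected_iUnion
    ⟨E.pos v, Set.mem_iInter.2 fun u => ⟨0, by norm_num, E.arc_zero u.2⟩⟩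
    (fun u => isPreconnected_Icc.image _ (E.arc_cont u.2).continuousOn)
  have hQp : ∀ u v, G.Adj u v → IsPreconnected (Q u v) := fun u v huv =>
    isPreconnected_Icc.image _ (E.arc_cont huv).continuousOn
  have hne0 : ∀ u v, G.Adj u v → ∀ t ∈ Set.Icc (0:ℝ) 1, E.arc u v t = E.pos u → t = 0 := by
    intro u v huv t ht h
    rw [← E.arc_zero huv] at h
    exact E.arc_injOn huv ht (by norm_num) h
  have hne1 : ∀ u v, G.Adj u v → ∀ t ∈ Set.Icc (0:ℝ) 1, E.arc u v t = E.pos v → t = 1 := by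
    intro u v huv t ht h
    rw [← E.arc_one huv] at h
    exact E.arc_injOn huv ht (by norm_num) h
  have hKd : ∀ u v, u ≠ v → Disjoint (K u) (K v) := by
    intro u v huv
    rw [Set.disjoint_left]
    intro z hz hz'
    obtain ⟨⟨a, ha⟩, s, hs, rfl⟩ := Set.mem_iUnion.1 hz
    obtain ⟨⟨b, hb⟩, t, ht, he⟩ := Set.mem_iUnion.1 hz'
    dsimp only at he ha hb hs ht
    have hs' : s ∈ Set.Icc (0:ℝ) 1 := ⟨hs.1, by linarith [hs.2]⟩
    have ht' : t ∈ Set.Icc (0:ℝ) 1 := ⟨ht.1, by linarith [ht.2]⟩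
    by_cases hsym : s(u, a) = s(v, b)
    · rw [Sym2.eq_iff] at hsym
      rcases hsym with ⟨h1, _⟩ | ⟨h1, h2⟩
      · exact huv h1
      · subst h1 h2
        rw [E.arc_symm ha] at he
        have := E.arc_injOn ha ⟨by linarith [ht.2], by linarith [ht.1]⟩ hs' he
        linarith [hs.2, ht.2]
    · have hm := E.arc_meet ha hb hsym ⟨⟨s, hs', rfl⟩, ⟨t, ht', he⟩⟩
      obtain ⟨m1, m2⟩ := hm
      have k1 : E.arc u a s = E.pos u := by
        rcases m1 with m1 | m1
        · exact m1
        · have := hne1 u a ha s hs' m1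
          linarith [hs.2]
      have k2 : E.arc u a s = E.pos v := by
        rcases m2 with m2 | m2
        · exact m2
        · rw [← he] at m2
          have := hne1 v b hb t ht' m2
          linarith [ht.2]
      exact huv (E.pos_inj (k1.symm.trans k2))
  have hmid : ∀ u v x y s t, G.Adj u v → G.Adj x y → s(u,v) ≠ s(x,y) → s ∈ Set.Icc (1/3:ℝ) (2/3) →
      t ∈ Set.Icc (0:ℝ) 1 → E.arc x y t ≠ E.arc u v s := by
    intro u v x y s t huv hxy hne hs ht he
    have hs' : s ∈ Set.Icc (0:ℝ) 1 := ⟨by linarith [hs.1], by linarith [hs.2]⟩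
    obtain ⟨m1, -⟩ := E.arc_meet huv hxy hne ⟨⟨s, hs', rfl⟩, ⟨t, ht, he⟩⟩
    rcases m1 with m1 | m1
    · have := hne0 u v huv s hs' m1
      linarith [hs.1]
    · have := hne1 u v huv s hs' m1
      linarith [hs.2]
  have hQKd : ∀ u v w, G.Adj u v → w ≠ u → w ≠ v → Disjoint (Q u v) (K w) := by
    intro u v w huv hwu hwv
    rw [Set.disjoint_left]
    rintro _ ⟨s, hs, rfl⟩ hz
    obtain ⟨⟨b, hb⟩, t, ht, he⟩ := Set.mem_iUnion.1 hz
    refine hmid u v w b s t huv hb ?_ hs ⟨ht.1, by linarith [ht.2]⟩ he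
    rw [Ne, Sym2.eq_iff]
    rintro (⟨h, _⟩ | ⟨_, h⟩)
    · exact hwu h.symm
    · exact hwv h.symm
  have hQQd : ∀ u v x y, G.Adj u v → G.Adj x y → s(u,v) ≠ s(x,y) → Disjoint (Q u v) (Q x y) := by
    intro u v x y huv hxy hne
    rw [Set.disjoint_left]
    rintro _ ⟨s, hs, rfl⟩ ⟨t, ht, he⟩
    exact hmid u v x y s t huv hxy hne hs ⟨by linarith [ht.1], by linarith [ht.2]⟩ he
  have ev1 : ∀ᶠ h : ℝ in Filter.atTop, ∀ u v, u ≠ v → ∀ M : ℕ, (∀ p ∈ K u, Pos h M p) →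
      (∀ p ∈ K v, Pos h M p) → Disjoint (bm h M '' K u) (bm h M '' K v) := by
    rw [Filter.eventually_all]; intro u
    rw [Filter.eventually_all]; intro v
    rw [Filter.eventually_imp_distrib_left]; intro huv
    exact ev_disj _ _ (hKc u) (hKc v) (hKd u v huv)
  have ev2 : ∀ᶠ h : ℝ in Filter.atTop, ∀ u v w, G.Adj u v → w ≠ u → w ≠ v → ∀ M : ℕ,
      (∀ p ∈ Q u v, Pos h M p) → (∀ p ∈ K w, Pos h M p) →
      Disjoint (bm h M '' Q u v) (bm h M '' K w) := by
    rw [Filter.eventually_all]; intro u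
    rw [Filter.eventually_all]; intro v
    rw [Filter.eventually_all]; intro w
    rw [Filter.eventually_imp_distrib_left]; intro huv
    rw [Filter.eventually_imp_distrib_left]; intro hwu
    rw [Filter.eventually_imp_distrib_left]; intro hwv
    exact ev_disj _ _ (hQc u v huv) (hKc w) (hQKd u v w huv hwu hwv)
  have ev3 : ∀ᶠ h : ℝ in Filter.atTop, ∀ u v x y, G.Adj u v → G.Adj x y → s(u,v) ≠ s(x,y) →
      ∀ M : ℕ, (∀ p ∈ Q u v, Pos h M p) → (∀ p ∈ Q x y, Pos h M p) →
      Disjoint (bm h M '' Q u v) (bm h M '' Q x y) := by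
    rw [Filter.eventually_all]; intro u
    rw [Filter.eventually_all]; intro v
    rw [Filter.eventually_all]; intro x
    rw [Filter.eventually_all]; intro y
    rw [Filter.eventually_imp_distrib_left]; intro huv
    rw [Filter.eventually_imp_distrib_left]; intro hxy
    rw [Filter.eventually_imp_distrib_left]; intro hne
    exact ev_disj _ _ (hQc u v huv) (hQc x y hxy) (hQQd u v x y huv hxy hne)
  obtain ⟨h, d1, d2, d3⟩ := (ev1.and (ev2.and ev3)).exists
  have hXc : IsCompact ((⋃ v, K v) ∪ ⋃ e : {e : V × V // G.Adj e.1 e.2}, Q e.1.1 e.1.2) :=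
    (isCompact_iUnion hKc).union (isCompact_iUnion fun e => hQc _ _ e.2)
  obtain ⟨M, N, hN, hb⟩ := brick_bound h _ hXc
  have bK : ∀ v, ∀ p ∈ K v, Pos h M p ∧ bm h M p ∈ Inn N := fun v p hp =>
    hb p (Or.inl (Set.mem_iUnion.2 ⟨v, hp⟩))
  have bQ : ∀ u v, G.Adj u v → ∀ p ∈ Q u v, Pos h M p ∧ bm h M p ∈ Inn N := fun u v huv p hp =>
    hb p (Or.inr (Set.mem_iUnion.2 ⟨⟨(u, v), huv⟩, hp⟩))
  have hmeet : ∀ u v, G.Adj u v → E.arc u v (1/3) ∈ K u := fun u v huv =>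
    Set.mem_iUnion.2 ⟨⟨v, huv⟩, 1/3, by norm_num, rfl⟩
  obtain ⟨lbl, l1, l2, l3⟩ := grow G N (fun v => bm h M '' K v) (fun u v => bm h M '' Q u v)
    (by rintro v _ ⟨p, hp, rfl⟩; exact (bK v p hp).2)
    (by
      intro v
      obtain ⟨u, hu⟩ := hnb v
      exact ⟨_, _, hmeet v u hu, rfl⟩)
    (fun v => image_conn h M _ (hKp v) fun p hp => (bK v p hp).1)
    (fun u v huv => d1 u v huv M (fun p hp => (bK u p hp).1) (fun p hp => (bK v p hp).1))
    (by rintro u v huv _ ⟨p, hp, rfl⟩; exact (bQ u v huv p hp).2)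
    (fun u v huv => image_conn h M _ (hQp u v huv) fun p hp => (bQ u v huv p hp).1)
    (by
      intro u v huv
      exact ⟨_, ⟨_, ⟨1/3, by norm_num, rfl⟩, rfl⟩, ⟨_, hmeet u v huv, rfl⟩⟩)
    (by
      intro u v huv
      refine ⟨_, ⟨_, ⟨2/3, by norm_num, rfl⟩, rfl⟩, ⟨_, hmeet v u huv.symm, ?_⟩⟩
      rw [E.arc_symm huv]; norm_num)
    (fun u v w huv hwu hwv => d2 u v w huv hwu hwv M (fun p hp => (bQ u v huv p hp).1)
      (fun p hp => (bK w p hp).1))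
    (fun u v x y huv hxy hne => d3 u v x y huv hxy hne M (fun p hp => (bQ u v huv p hp).1)
      (fun p hp => (bQ x y hxy p hp).1))
  exact ⟨N, lbl, hN, l1, l2, l3⟩

end FF

namespace FF
open Classical

/-- the budgets -/
abbrev bud : ℕ → ℕ := fun t => if t = 0 then 3 else 2

lemma fire {V : Type} [Finite V] (G : SimpleGraph V) (hG : G.Connected) (r : V) (S P : Set V)
    (hr : r ∉ S) (h1 : ∀ w ∈ S, ∀ u, u ∉ S → G.Adj u w → w ∈ P ∨ u = r)
    (h2 : (S ∩ {w | G.Adj r w}).ncard ≤ 3)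
    (h3 : ∀ t, 2 ≤ t → (P ∩ S ∩ {w | G.dist r w = t}).ncard ≤ 2) :
    S.ncard ≤ sn G bud r := by
  set R : ℕ → Set V := fun t => if t = 0 then S ∩ {w | G.Adj r w}
    else P ∩ S ∩ {w | G.dist r w = t + 1} with hR
  have hRS : ∀ t, R t ⊆ S := by
    intro t w hw
    simp only [hR] at hw
    split_ifs at hw
    · exact hw.1
    · exact hw.1.2
  have hburn : ∀ t, burnedSet G r R t ⊆ {w | w ∉ S ∧ G.dist r w ≤ t} := by
    intro t
    induction t with
    | zero =>
      intro w hw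
      have hwr : w = r := hw
      rw [hwr]
      exact ⟨hr, by simp⟩
    | succ t ih =>
      rintro w (hw | ⟨⟨u, hu, huw⟩, hw⟩)
      · exact ⟨(ih hw).1, (ih hw).2.trans (Nat.le_succ t)⟩
      · obtain ⟨huS, hud⟩ := ih hu
        have hd : G.dist r w ≤ t + 1 := by
          have := hG.dist_triangle (u := r) (v := u) (w := w)
          rw [SimpleGraph.dist_eq_one_iff_adj.2 huw] at this
          omega
        refine ⟨fun hwS => ?_, hd⟩
        have h0 : ¬ G.Adj r w := by
          intro h
          exact hw 0 (Nat.zero_le _) (by simp only [hR, if_true]; exact ⟨hwS, h⟩)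
        have hwr : r ≠ w := fun h => hr (h ▸ hwS)
        rcases h1 w hwS u huS huw with hP | rfl
        · have hp := hG.pos_dist_of_ne hwr
          have hn1 : G.dist r w ≠ 1 := fun h => h0 (SimpleGraph.dist_eq_one_iff_adj.1 h)
          refine hw (G.dist r w - 1) (by omega) ?_
          simp only [hR]
          rw [if_neg (by omega)]
          refine ⟨⟨hP, hwS⟩, ?_⟩
          simp only [Set.mem_ofPred_eq]; omega
        · exact h0 huw
  have hvalid : ValidStrategy G bud r R := by
    intro t
    refine ⟨Set.toFinite _, ?_, ?_⟩
    · by_cases ht : t = 0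
      · simp only [hR, bud, if_pos ht]; exact h2
      · simp only [hR, bud, if_neg ht]; exact h3 (t+1) (by omega)
    · rw [Set.disjoint_left]
      intro w hw hb
      exact (hburn t hb).1 (hRS t hw)
  have hle : S.ncard ≤ Nat.card {w : V | ∀ t, w ∉ burnedSet G r R t} := by
    rw [Nat.card_coe_set_eq]
    apply Set.ncard_le_ncard _ (Set.toFinite _)
    intro w hw t hb
    exact (hburn t hb).1 hw
  refine hle.trans (le_csSup ⟨Nat.card V, ?_⟩ ⟨R, hvalid, rfl⟩)
  rintro m ⟨R', _, rfl⟩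
  exact Nat.card_le_card_of_injective _ Subtype.val_injective

lemma low_vertex {V : Type} [Fintype V] (G : SimpleGraph V) (hG : G.Connected) (r : V)
    (hd : {w | G.Adj r w}.ncard ≤ 3) : Nat.card V ≤ sn G bud r + 1 := by
  have := fire G hG r {r}ᶜ ∅ (by simp) (by
      intro w _ u hu _; right; simpa using hu)
    ((Set.ncard_le_ncard Set.inter_subset_right (Set.toFinite _)).trans hd)
    (by intro t _; simp)
  rw [Set.ncard_compl, Set.ncard_singleton] at this
  omega

lemma exists_par {V : Type} (G : SimpleGraph V) (hG : G.Connected) (r v : V) (hv : v ≠ r) :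
    ∃ u, G.Adj v u ∧ G.dist r u + 1 = G.dist r v := by
  obtain ⟨p, hp⟩ := hG.exists_walk_length_eq_dist v r
  cases p with
  | nil => exact absurd rfl hv
  | @cons _ u _ h q =>
    refine ⟨u, h, ?_⟩
    have k1 : G.dist u r ≤ q.length := SimpleGraph.dist_le q
    have k2 := hG.dist_triangle (u := v) (v := u) (w := r)
    rw [SimpleGraph.dist_eq_one_iff_adj.2 h] at k2
    rw [SimpleGraph.Walk.length_cons] at hp
    rw [SimpleGraph.dist_comm (u := r), SimpleGraph.dist_comm (u := r)]
    omega

lemma main_vertex {V : Type} [Finite V] (G : SimpleGraph V) (hG : G.Connected) (hP : IsPlanar G)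
    (hnb : ∀ v, ∃ u, G.Adj v u) (r : V) (hd : {w | G.Adj r w}.ncard ≤ 5) :
    Nat.card V ≤ 3 * sn G bud r + 1 := by
  have : Nonempty V := ⟨r⟩
  obtain ⟨N, lbl, hN, l1, l2, l3⟩ := latticeModel G hP hnb
  have hpe : ∀ v, ∃ u, (v = r → u = r) ∧ (v ≠ r → G.Adj v u ∧ G.dist r u + 1 = G.dist r v) := by
    intro v
    by_cases hv : v = r
    · exact ⟨r, fun _ => rfl, fun h => absurd hv h⟩
    · obtain ⟨u, hu⟩ := exists_par G hG r v hv
      exact ⟨u, fun h => absurd h hv, fun _ => hu⟩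
  choose par hpr hpn using hpe
  have hdp : ∀ k v, G.dist r (par^[k] v) = G.dist r v - k := by
    intro k
    induction k with
    | zero => intro v; rfl
    | succ k ih =>
      intro v
      rw [Function.iterate_succ_apply, ih]
      by_cases hv : v = r
      · rw [hpr v hv, hv]; simp
      · have := (hpn v hv).2; omega
  have hrA : ∀ x, r ∈ Anc par x := by
    intro x
    refine ⟨G.dist r x, ?_⟩
    have := hdp (G.dist r x) x
    rw [Nat.sub_self, hG.dist_eq_zero_iff] at this
    exact this.symm
  have hlev : ∀ x t, 1 ≤ t → (Anc par x ∩ {w | G.dist r w = t}).ncard ≤ 1 := by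
    intro x t ht
    rw [Set.ncard_le_one_iff_subsingleton]
    rintro _ ⟨⟨k, rfl⟩, hk⟩ _ ⟨⟨k', rfl⟩, hk'⟩
    rw [Set.mem_ofPred_eq, hdp] at hk hk'
    have : k = k' := by omega
    rw [this]
  obtain ⟨A, U, hA, hUA, hW, hadj, hcov⟩ := sep N hN lbl l1 l2 r par (G.dist r)
    (fun v hv => ⟨(hpn v hv).2, l3 _ _ (hpn v hv).1⟩)
  have hAr : ∀ i, r ∈ A i := by
    intro i
    obtain ⟨x, y, h⟩ := hA i
    rw [h]; exact Or.inl (hrA x)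
  have hA2 : ∀ i t, 1 ≤ t → (A i ∩ {w | G.dist r w = t}).ncard ≤ 2 := by
    intro i t ht
    obtain ⟨x, y, h⟩ := hA i
    rw [h, Set.union_inter_distrib_right]
    have := hlev x t ht
    have := hlev y t ht
    exact (Set.ncard_union_le _ _).trans (by omega)
  have hA3 : ∀ i S t, 2 ≤ t → (A i ∩ S ∩ {w | G.dist r w = t}).ncard ≤ 2 := by
    intro i S t ht
    refine (Set.ncard_le_ncard ?_ (Set.toFinite _)).trans (hA2 i t (by omega))
    exact fun w hw => ⟨hw.1.1, hw.2⟩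
  have hrU : ∀ i, r ∉ U i := fun i h => Set.disjoint_left.1 (hUA i) h (hAr i)
  by_cases hcase : ∃ i, 2 ≤ (U i ∩ {w | G.Adj r w}).ncard
  · obtain ⟨i, hi⟩ := hcase
    have hf := fire G hG r (insert r (U i))ᶜ (A i) (by simp)
      (by
        intro w hw u hu huw
        rw [Set.mem_compl_iff, not_not] at hu
        rcases hu with rfl | hu
        · exact Or.inr rfl
        · exact Or.inl (hadj i u w (l3 u w huw) hu (fun h => hw (Or.inr h))))
      (by
        have h5 : ((insert r (U i))ᶜ ∩ {w | G.Adj r w}) ∪ (U i ∩ {w | G.Adj r w}) ⊆ {w | G.Adj r w} :=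
          Set.union_subset Set.inter_subset_right Set.inter_subset_right
        have h6 : Disjoint ((insert r (U i))ᶜ ∩ {w | G.Adj r w}) (U i ∩ {w | G.Adj r w}) := by
          rw [Set.disjoint_left]
          exact fun w hw hw' => hw.1 (Or.inr hw'.1)
        have h7 := Set.ncard_le_ncard h5 (Set.toFinite _)
        rw [Set.ncard_union_eq h6] at h7
        omega)
      (fun t ht => hA3 i _ t ht)
    rw [Set.ncard_compl, Set.ncard_insert_of_notMem (hrU i)] at hf
    obtain ⟨W, w1, w2, w3⟩ := hW i
    have h8 : (insert r (U i ∪ W)).ncard = (U i).ncard + W.ncard + 1 := by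
      rw [Set.ncard_insert_of_notMem, Set.ncard_union_eq w1.symm]
      rintro (h | h)
      · exact hrU i h
      · exact Set.disjoint_left.1 w2 h (hAr i)
    have h9 := Set.ncard_le_card (insert r (U i ∪ W))
    omega
  · push Not at hcase
    have hf : ∀ i, ((U i ∪ A i) \ {r}).ncard ≤ sn G bud r := by
      intro i
      refine fire G hG r _ (A i) (by simp) ?_ ?_ (fun t ht => hA3 i _ t ht)
      · rintro w ⟨hw | hw, -⟩ u hu huw
        · by_cases hur : u = r
          · exact Or.inr hur
          · have huu : u ∉ U i ∪ A i := fun h => hu ⟨h, hur⟩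
            exact absurd (Or.inr (hadj i w u (l3 w u huw.symm) hw (fun h => huu (Or.inl h)))) huu
        · exact Or.inl hw
      · have h5 : (U i ∪ A i) \ {r} ∩ {w | G.Adj r w} ⊆
            (U i ∩ {w | G.Adj r w}) ∪ (A i ∩ {w | G.dist r w = 1}) := by
          rintro w ⟨⟨hw | hw, -⟩, hrw⟩
          · exact Or.inl ⟨hw, hrw⟩
          · exact Or.inr ⟨hw, SimpleGraph.dist_eq_one_iff_adj.2 hrw⟩
        have h6 := Set.ncard_le_ncard h5 (Set.toFinite _)
        have h7 := Set.ncard_union_le (U i ∩ {w | G.Adj r w}) (A i ∩ {w | G.dist r w = 1})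
        have h8 := hA2 i 1 le_rfl
        have h9 := hcase i
        omega
    have hc : ({r}ᶜ : Set V) ⊆ ((U 0 ∪ A 0) \ {r}) ∪ ((U 1 ∪ A 1) \ {r}) ∪ ((U 2 ∪ A 2) \ {r}) := by
      intro v hv
      obtain ⟨i, hi⟩ := hcov v
      fin_cases i
      · exact Or.inl (Or.inl ⟨hi, hv⟩)
      · exact Or.inl (Or.inr ⟨hi, hv⟩)
      · exact Or.inr ⟨hi, hv⟩
    have k1 := Set.ncard_le_ncard hc (Set.toFinite _)
    have k2 := Set.ncard_union_le (((U 0 ∪ A 0) \ {r}) ∪ ((U 1 ∪ A 1) \ {r})) ((U 2 ∪ A 2) \ {r})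
    have k3 := Set.ncard_union_le ((U 0 ∪ A 0) \ {r}) ((U 1 ∪ A 1) \ {r})
    rw [Set.ncard_compl, Set.ncard_singleton] at k1
    have := hf 0
    have := hf 1
    have := hf 2
    omega

end FF

theorem surviving_rate_three_two {V : Type} [Fintype V] (G : SimpleGraph V)
    [DecidableRel G.Adj] (hconn : G.Connected) (hplanar : IsPlanar G)
    (hn : 2 ≤ Fintype.card V)
    (havg : (2 * (Nat.card G.edgeSet) : ℝ) / (Fintype.card V : ℝ) < 4)
    (hsmall : ∃ u v : V, u ≠ v ∧ G.degree u < 4 ∧ G.degree v < 4) :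
    survivingRate G (fun t => if t = 0 then 3 else 2) ≥ 1 / 3 := by
  classical
  have hnt : Nontrivial V := Fintype.one_lt_card_iff_nontrivial.1 (by omega)
  have hnb : ∀ v, ∃ u, G.Adj v u := fun v => hconn.preconnected.exists_adj_of_nontrivial v
  have hdeg : ∀ v, {w | G.Adj v w}.ncard = G.degree v := by
    intro v
    rw [← SimpleGraph.card_neighborFinset_eq_degree, ← Set.ncard_coe_finset]
    congr 1
    ext w; simp
  have hdeg1 : ∀ v, 1 ≤ G.degree v := by
    intro v
    obtain ⟨u, hu⟩ := hnb v
    exact (G.degree_pos_iff_exists_adj v).2 ⟨u, hu⟩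
  set n := Fintype.card V with hnn
  have hcard : Nat.card V = n := Nat.card_eq_fintype_card
  set s : V → ℤ := fun v => (sn G FF.bud v : ℤ) with hs
  set c : V → ℤ := fun v => if G.degree v < 4 then 3 else if G.degree v < 6 then 1 else 0 with hc
  have hsc : ∀ v, ((n:ℤ) - 1) * c v ≤ 3 * s v := by
    intro v
    simp only [hc, hs]
    split_ifs with h1 h2
    · have := FF.low_vertex G hconn v (by rw [hdeg]; omega)
      rw [hcard] at this
      have : (n:ℤ) ≤ sn G FF.bud v + 1 := by exact_mod_cast this
      linarith
    · have := FF.main_vertex G hconn hplanar hnb v (by rw [hdeg]; omega)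
      rw [hcard] at this
      have : (n:ℤ) ≤ 3 * sn G FF.bud v + 1 := by exact_mod_cast this
      linarith
    · rw [mul_zero]; positivity
  have hpt : ∀ v, (4 - (G.degree v : ℤ)) + (if G.degree v < 4 then 1 else 0) ≤ 2 * (c v - 1) := by
    intro v
    have := hdeg1 v
    simp only [hc]
    split_ifs <;> omega
  have hsumdeg : ∑ v, (4 - (G.degree v : ℤ)) ≥ 1 := by
    have h1 : ∑ v, G.degree v = 2 * Nat.card G.edgeSet := by
      rw [G.sum_degrees_eq_twice_card_edges, ← SimpleGraph.coe_edgeFinset, Nat.card_coe_set_eq,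
        Set.ncard_coe_finset]
    have hn0 : (0:ℝ) < n := by exact_mod_cast (by omega : 0 < n)
    rw [div_lt_iff₀ hn0] at havg
    have h2 : 2 * Nat.card G.edgeSet < 4 * n := by exact_mod_cast havg
    rw [← h1] at h2
    rw [Finset.sum_sub_distrib]
    have h3 : (∑ v, (G.degree v : ℤ)) < 4 * n := by exact_mod_cast h2
    simp only [Finset.sum_const, Finset.card_univ, nsmul_eq_mul]
    rw [← hnn]
    linarith
  have hlow : (2:ℤ) ≤ ∑ v, (if G.degree v < 4 then (1:ℤ) else 0) := by
    obtain ⟨u, v, huv, hu, hv⟩ := hsmall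
    have : ∑ x ∈ ({u, v} : Finset V), (if G.degree x < 4 then (1:ℤ) else 0) ≤
        ∑ x, (if G.degree x < 4 then (1:ℤ) else 0) :=
      Finset.sum_le_sum_of_subset_of_nonneg (Finset.subset_univ _)
        (fun x _ _ => by split_ifs <;> norm_num)
    rw [Finset.sum_pair huv, if_pos hu, if_pos hv] at this
    linarith
  have hcs : (n:ℤ) + 2 ≤ ∑ v, c v := by
    have h1 := Finset.sum_le_sum (s := Finset.univ) (fun v _ => hpt v)
    rw [Finset.sum_add_distrib, ← Finset.mul_sum, Finset.sum_sub_distrib] at h1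
    simp only [Finset.sum_const, Finset.card_univ, nsmul_eq_mul, mul_one] at h1
    rw [← hnn] at h1
    simp only [Finset.sum_sub_distrib, Finset.sum_const, Finset.card_univ, nsmul_eq_mul] at hsumdeg h1
    rw [← hnn] at hsumdeg
    omega
  have hfin : (n:ℤ)^2 ≤ 3 * ∑ v, s v := by
    have h1 := Finset.sum_le_sum (s := Finset.univ) (fun v _ => hsc v)
    rw [← Finset.mul_sum, ← Finset.mul_sum] at h1
    have hn2 : (2:ℤ) ≤ n := by exact_mod_cast hn
    nlinarith
  have hfinR : (n:ℝ)^2 ≤ 3 * ∑ v, (sn G FF.bud v : ℝ) := by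
    simp only [hs] at hfin
    exact_mod_cast hfin
  have hn0 : (0:ℝ) < (n:ℝ)^2 := by
    have : (0:ℝ) < n := by exact_mod_cast (by omega : 0 < n)
    positivity
  show (∑ v : V, (sn G FF.bud v : ℝ)) / (n : ℝ) ^ 2 ≥ 1 / 3
  rw [ge_iff_le, div_le_div_iff₀ (by norm_num) hn0]
  linarith
end
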